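/- arXiv:1311.7084 — 8 statements merged into one kernel-verified Lean document; each statement's English description precedes it below -/
import Mathlib

section
/- Let h be a prime power, t ≥ 1, q = h^t, let s ≤ m be positive integers and ε ∈ (0,1). Suppose V_1,…,V_M are F_q-linear subspaces of F_q^m, each of F_q-codimension at most εm, such that for every F_q-subspace W ⊆ F_q^m of F_q-dimension s one has Σ_{i=1}^M dim_{F_q}(V_i ∩ W) ≤ A. Suppose further that S ⊆ F_q^m is an F_h-linear subspace of F_h-codimension at most εtm (viewing F_q^m as an F_h-vector space of dimension tm) such that, for every integer 1 ≤ κ ≤ s and every F_q-subspace U ⊆ F_q^m of F_q-dimension κ, one has |U ∩ S| ≤ h^{(m−1)κ}. Then the F_h-linear subspaces H_i := V_i ∩ S each have F_h-codimension at most 2εtm in F_q^m, and they form an (s, (m−1)A, t) F_h-subspace design: for every F_q-subspace W ⊆ F_q^m of F_q-dimension s, Σ_{i=1}^M dim_{F_h}(H_i ∩ W) ≤ (m−1)·A. -/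
/-!
Write `K = F_h`, `L = F_q` and `c = m - 1`. For an `L`-subspace `W` of dimension `s`, each `Vᵢ ∩ W`
is itself an `L`-subspace of dimension at most `s`, so the bound on `U ∩ S` applies to it, which
in terms of dimensions says that `dim_K (Vᵢ ∩ W ∩ S) ≤ c * dim_L (Vᵢ ∩ W)`. Summing over `i` turns
the bound `A` into `c * A`. The codimension bound is subadditivity of codimension, since restriction
of scalars preserves codimension relative to the whole space.
-/

open Module

theorem finrank_eq_of_card_eq_pow {K E : Type*} [Field K] [Fintype K] [AddCommGroup E]
    [Fintype E] [Module K E] {n : ℕ} (h : Fintype.card E = Fintype.card K ^ n) :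
    finrank K E = n :=
  Nat.pow_right_injective (Fintype.one_lt_card (α := K)) (card_eq_pow_finrank.symm.trans h)

section Codimension

variable {K L E : Type*} [Field K] [AddCommGroup E] [Module K E]

theorem finrank_sub_finrank_inf_le [Module.Finite K E] (U S : Submodule K E) :
    (finrank K E : ℝ) - finrank K ↥(U ⊓ S)
      ≤ ((finrank K E : ℝ) - finrank K U) + ((finrank K E : ℝ) - finrank K S) := by
  have hsum : (finrank K ↥(U ⊔ S) : ℝ) + finrank K ↥(U ⊓ S) = finrank K U + finrank K S :=
    mod_cast Submodule.finrank_sup_add_finrank_inf_eq U S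
  have hsup : (finrank K ↥(U ⊔ S) : ℝ) ≤ finrank K E := mod_cast (U ⊔ S).finrank_le
  linarith

theorem finrank_sub_finrank_restrictScalars_le [Field L] [Algebra K L] [Module L E]
    [IsScalarTower K L E] {V : Submodule L E} {ε : ℝ}
    (hV : (finrank L E : ℝ) - finrank L V ≤ ε * finrank L E) :
    (finrank K E : ℝ) - finrank K (V.restrictScalars K) ≤ ε * finrank K E := by
  have hE : (finrank K L : ℝ) * finrank L E = finrank K E := mod_cast finrank_mul_finrank K L E
  have hVK : (finrank K L : ℝ) * finrank L V = finrank K (V.restrictScalars K) :=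
    mod_cast finrank_mul_finrank K L V
  calc (finrank K E : ℝ) - finrank K (V.restrictScalars K)
      = finrank K L * (finrank L E - finrank L V) := by rw [← hE, ← hVK, mul_sub]
    _ ≤ finrank K L * (ε * finrank L E) := by gcongr
    _ = ε * finrank K E := by rw [← hE, mul_left_comm]

end Codimension

section SubspaceDesign

variable {K E ι : Type*} (L : Type*) [Field K] [Field L] [Algebra K L] [AddCommGroup E]
  [Module K E] [Module L E] [IsScalarTower K L E]

/-- The `K`-subspaces `H i` form an `(s, A)` subspace design with respect to the extension `L / K`:
the dimensions over `K` of their intersections with any `s`-dimensional `L`-subspace sum to at most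
`A`. For `K = L` this is the usual notion of an `(s, A)` subspace design over `L`. -/
def IsSubspaceDesign [Fintype ι] (H : ι → Submodule K E) (s A : ℕ) : Prop :=
  ∀ W : Submodule L E, finrank L W = s → ∑ i, finrank K ↥(H i ⊓ W.restrictScalars K) ≤ A

/-- The `K`-subspace `S` is evasive for `L`-subspaces of dimension at most `s`: it meets each such
`U` in dimension at most `c * dim_L U` over `K`. The bound is on dimensions, rather than on
the number of elements of `U ∩ S`, so that it is meaningful over infinite fields. -/
def IsSubspaceEvasive (S : Submodule K E) (s c : ℕ) : Prop :=
  ∀ U : Submodule L E, finrank L U ≤ s → finrank K ↥(U.restrictScalars K ⊓ S) ≤ c * finrank L U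

variable {L}

theorem IsSubspaceEvasive.of_natCard_le [Finite K] [Module.Finite K E] {S : Submodule K E}
    {s c : ℕ}
    (hS : ∀ κ : ℕ, 1 ≤ κ → κ ≤ s → ∀ U : Submodule L E, finrank L U = κ →
      Nat.card ↥((U : Set E) ∩ (S : Set E)) ≤ Nat.card K ^ (c * κ)) :
    IsSubspaceEvasive L S s c := by
  intro U hUs
  rcases (finrank L U).eq_zero_or_pos with hU | hU
  · calc finrank K ↥(U.restrictScalars K ⊓ S)
        ≤ finrank K (U.restrictScalars K) := Submodule.finrank_mono inf_le_left
      _ = finrank K L * finrank L U := (finrank_mul_finrank K L U).symm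
      _ = c * finrank L U := by rw [hU, mul_zero, mul_zero]
  · refine (Nat.pow_le_pow_iff_right (Finite.one_lt_card (α := K))).1 ?_
    rw [← natCard_eq_pow_finrank]
    exact hS _ hU hUs U rfl

theorem IsSubspaceDesign.restrictScalars_inf [Fintype ι] [Module.Finite L E]
    {V : ι → Submodule L E} {S : Submodule K E} {s c A : ℕ} (hV : IsSubspaceDesign L V s A)
    (hS : IsSubspaceEvasive L S s c) :
    IsSubspaceDesign L (fun i => (V i).restrictScalars K ⊓ S) s (c * A) := by
  intro W hW
  calc ∑ i, finrank K ↥((V i).restrictScalars K ⊓ S ⊓ W.restrictScalars K)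
      = ∑ i, finrank K ↥((V i ⊓ W).restrictScalars K ⊓ S) := by
        refine Finset.sum_congr rfl fun i _ => ?_
        rw [Submodule.restrictScalars_inf, inf_right_comm]
    _ ≤ ∑ i, c * finrank L ↥(V i ⊓ W) :=
        Finset.sum_le_sum fun i _ => hS _ (hW ▸ Submodule.finrank_mono inf_le_right)
    _ = c * ∑ i, finrank L ↥(V i ⊓ W) := (Finset.mul_sum ..).symm
    _ ≤ c * A := Nat.mul_le_mul_left c (hV W hW)

theorem stmt_2_general [Fintype ι] [Module.Finite K E] {V : ι → Submodule L E}
    {S : Submodule K E} {s c A : ℕ} {ε δ : ℝ}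
    (hVcodim : ∀ i, (finrank L E : ℝ) - finrank L (V i) ≤ ε * finrank L E)
    (hV : IsSubspaceDesign L V s A)
    (hScodim : (finrank K E : ℝ) - finrank K S ≤ δ * finrank K E)
    (hS : IsSubspaceEvasive L S s c) :
    (∀ i, (finrank K E : ℝ) - finrank K ↥((V i).restrictScalars K ⊓ S)
      ≤ (ε + δ) * finrank K E) ∧
    IsSubspaceDesign L (fun i => (V i).restrictScalars K ⊓ S) s (c * A) := by
  have : Module.Finite L E := Module.Finite.of_restrictScalars_finite K L E
  refine ⟨fun i => ?_, hV.restrictScalars_inf hS⟩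
  rw [add_mul]
  exact (finrank_sub_finrank_inf_le _ S).trans
    (add_le_add (finrank_sub_finrank_restrictScalars_le (hVcodim i)) hScodim)

end SubspaceDesign

/-- Let `q = h^t`, `1 ≤ s ≤ m`, `ε ∈ (0,1)`. Suppose `V_1, …, V_M` are
`F_q`-subspaces of `F_q^m` of codimension `≤ εm` forming an `(s, A)` `F_q`-subspace design,
and `S ⊆ F_q^m` is an `F_h`-linear subspace of `F_h`-codimension `≤ εtm` such that
`|U ∩ S| ≤ h^((m-1)κ)` for every `F_q`-subspace `U` of dimension `κ ≤ s`. Then the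
`F_h`-subspaces `H_i = V_i ∩ S` have `F_h`-codimension `≤ 2εtm` and form an
`(s, (m-1)A, t)` `F_h`-subspace design. -/
theorem stmt_2 (Fh Fq : Type) [Field Fh] [Fintype Fh] [Field Fq] [Fintype Fq]
    [Algebra Fh Fq] (t : ℕ) (ht : 1 ≤ t)
    (hq : Fintype.card Fq = Fintype.card Fh ^ t)
    (s m : ℕ) (hs : 1 ≤ s) (hsm : s ≤ m) (ε : ℝ) (hε0 : 0 < ε) (hε1 : ε < 1)
    (M A : ℕ) (V : Fin M → Submodule Fq (Fin m → Fq))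
    (hVcodim : ∀ i, (m : ℝ) - Module.finrank Fq (V i) ≤ ε * m)
    (hVdesign : ∀ W : Submodule Fq (Fin m → Fq), Module.finrank Fq W = s →
      ∑ i, Module.finrank Fq ↥(V i ⊓ W) ≤ A)
    (S : Submodule Fh (Fin m → Fq))
    (hScodim : (t * m : ℝ) - Module.finrank Fh S ≤ ε * (t * m))
    (hSevasive : ∀ κ : ℕ, 1 ≤ κ → κ ≤ s →
      ∀ U : Submodule Fq (Fin m → Fq), Module.finrank Fq U = κ →
        Nat.card ↥((U : Set (Fin m → Fq)) ∩ (S : Set (Fin m → Fq)))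
          ≤ Fintype.card Fh ^ ((m - 1) * κ)) :
    (∀ i, (t * m : ℝ) - Module.finrank Fh ↥((V i).restrictScalars Fh ⊓ S)
        ≤ 2 * ε * (t * m)) ∧
    (∀ W : Submodule Fq (Fin m → Fq), Module.finrank Fq W = s →
      ∑ i, Module.finrank Fh
          ↥((W.restrictScalars Fh) ⊓ ((V i).restrictScalars Fh ⊓ S))
        ≤ (m - 1) * A) := by
  have hdim : (finrank Fh (Fin m → Fq) : ℝ) = t * m := by
    rw [← finrank_mul_finrank Fh Fq, finrank_eq_of_card_eq_pow hq, finrank_fin_fun, Nat.cast_mul]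
  have hS : IsSubspaceEvasive Fq S s (m - 1) :=
    .of_natCard_le (by simpa only [Nat.card_eq_fintype_card] using hSevasive)
  rw [← hdim] at hScodim ⊢
  obtain ⟨hHcodim, hHdesign⟩ :=
    stmt_2_general (by simpa only [finrank_fin_fun] using hVcodim) hVdesign hScodim hS
  refine ⟨by simpa only [two_mul] using hHcodim, fun W hW => ?_⟩
  exact (Finset.sum_congr rfl fun i _ => by rw [inf_comm]).trans_le (hHdesign W hW)
end

section
/- Let h be a prime power, t ≥ 1, q = h^t, and let s, m, k be positive integers. Let H ⊆ F_q^{mk} be an (s,m,k)-periodic affine subspace, and let H_1,…,H_k be F_h-linear subspaces of F_q^m such that for every F_q-subspace W' ⊆ F_q^m of F_q-dimension at most s one has Σ_{j=1}^k dim_{F_h}(W' ∩ H_j) ≤ A. Then the intersection H ∩ (H_1 × H_2 × ⋯ × H_k), if nonempty, is an affine subspace of F_q^{mk} over F_h of F_h-dimension at most A; in particular it has at most h^A elements. -/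
/-!
A vector in the direction of a periodic affine subspace `H` is a difference of two points of `H`,
so its first nonzero coordinate lies in the period space `W`; if both points also lie in
`∏ j, Hs j`, that coordinate lies in `W ⊓ Hs j`. Peeling off one coordinate at a time, rank-nullity
bounds the dimension of the intersection by `∑ j, dim (W ⊓ Hs j)`. Since an affine subspace over an
extension field is one over the base field, all of this takes place over a single field.
-/

open Cardinal Module

universe u v w

theorem lift_rank_map_add_rank_inf_ker {R : Type u} {M : Type v} {M' : Type w} [Ring R]
    [HasRankNullity.{v} R] [AddCommGroup M] [Module R M] [AddCommGroup M'] [Module R M']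
    (L : Submodule R M) (f : M →ₗ[R] M') :
    lift.{v} (Module.rank R (L.map f)) + lift.{w} (Module.rank R ↥(L ⊓ LinearMap.ker f)) =
      lift.{w} (Module.rank R L) := by
  rw [← (f.domRestrict L).lift_rank_range_add_rank_ker, LinearMap.range_domRestrict,
    (L.equivSubtypeMap _).rank_eq, LinearMap.ker_domRestrict, Submodule.map_comap_subtype]

section LeadingCoordinates

variable {R : Type u} {ι : Type w} {M : ι → Type v} [Ring R] [HasRankNullity.{max v w} R]
  [∀ i, AddCommGroup (M i)] [∀ i, Module R (M i)]

theorem rank_map_proj_add_rank_inf_ker_proj (L : Submodule R (∀ i, M i)) (j : ι) :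
    lift.{w} (Module.rank R (L.map (LinearMap.proj j : (∀ i, M i) →ₗ[R] M j))) +
        Module.rank R ↥(L ⊓ LinearMap.ker (LinearMap.proj j : (∀ i, M i) →ₗ[R] M j)) =
      Module.rank R L := by
  have h := lift_rank_map_add_rank_inf_ker L (LinearMap.proj j : (∀ i, M i) →ₗ[R] M j)
  rwa [lift_id'.{v, w}, lift_id'.{v, w}, lift_umax.{v, w}] at h

variable [Preorder ι] {U : ∀ i, Submodule R (M i)}

theorem rank_le_sum_rank_of_leading_mem_of_support_subset (s : Finset ι)
    (L : Submodule R (∀ i, M i)) (hs : ∀ x ∈ L, ∀ i ∉ s, x i = 0)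
    (hL : ∀ x ∈ L, ∀ j, (∀ i < j, x i = 0) → x j ∈ U j) :
    Module.rank R L ≤ lift.{w} (∑ j ∈ s, Module.rank R (U j)) := by
  classical
  induction s using Finset.strongInduction generalizing L with
  | H s ih =>
    obtain rfl | hne := s.eq_empty_or_nonempty
    · obtain rfl : L = ⊥ :=
        (Submodule.eq_bot_iff L).mpr fun x hx => funext fun i => hs x hx i (Finset.notMem_empty i)
      have := nontrivial_of_hasRankNullity (R := R)
      simp
    · obtain ⟨j, hj⟩ := s.exists_minimal hne
      have hmap : L.map (LinearMap.proj j) ≤ U j := by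
        rintro _ ⟨x, hx, rfl⟩
        exact hL x hx j fun i hij => hs x hx i fun hi => hj.not_lt hi hij
      have hker_support : ∀ x ∈ L ⊓ LinearMap.ker (LinearMap.proj j), ∀ i ∉ s.erase j, x i = 0 := by
        rintro x ⟨hx, hxj⟩ i hi
        obtain rfl | hij := eq_or_ne i j
        · exact hxj
        · exact hs x hx i fun his => hi (Finset.mem_erase.mpr ⟨hij, his⟩)
      have hker := ih (s.erase j) (s.erase_ssubset hj.prop) _ hker_support fun x hx => hL x hx.1
      calc Module.rank R L
        _ = _ := (rank_map_proj_add_rank_inf_ker_proj L j).symm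
        _ ≤ lift.{w} (Module.rank R (U j)) + lift.{w} (∑ i ∈ s.erase j, Module.rank R (U i)) :=
          add_le_add (lift_le.mpr (Submodule.rank_mono hmap)) hker
        _ = lift.{w} (∑ i ∈ s, Module.rank R (U i)) := by
          rw [← lift_add, Finset.add_sum_erase s (fun i => Module.rank R (U i)) hj.prop]

theorem rank_le_sum_rank_of_leading_mem [Fintype ι] (L : Submodule R (∀ i, M i))
    (hL : ∀ x ∈ L, ∀ j, (∀ i < j, x i = 0) → x j ∈ U j) :
    Module.rank R L ≤ lift.{w} (∑ j, Module.rank R (U j)) :=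
  rank_le_sum_rank_of_leading_mem_of_support_subset Finset.univ L (by simp) hL

end LeadingCoordinates

section Cardinality

variable {K V : Type*} [DivisionRing K] [AddCommGroup V] [Module K V]

theorem enatCard_eq_pow_finrank [Module.Finite K V] :
    ENat.card V = ENat.card K ^ finrank K V := by
  rw [ENat.card_congr (finBasis K V).equivFun.toEquiv]
  simp

theorem enatCard_le_pow_of_rank_le {n : ℕ} (h : Module.rank K V ≤ n) :
    ENat.card V ≤ ENat.card K ^ n := by
  have : Module.Finite K V := rank_lt_aleph0_iff.mp (h.trans_lt natCast_lt_aleph0)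
  rw [enatCard_eq_pow_finrank (K := K)]
  exact pow_le_pow_right₀ ((ENat.one_le_card_iff_nonempty K).mpr inferInstance)
    (finrank_le_of_rank_le h)

theorem encard_affineSubspace_le_pow_of_rank_direction_le {P : Type*} [AddTorsor V P]
    {S : AffineSubspace K P} {n : ℕ} (h : Module.rank K S.direction ≤ n) :
    (S : Set P).encard ≤ ENat.card K ^ n := by
  obtain rfl | ⟨p, hp⟩ := S.eq_bot_or_nonempty
  · simp
  · have : Nonempty S := ⟨p, hp⟩
    calc (S : Set P).encard
      _ = ENat.card S.direction := ENat.card_congr (Equiv.vaddConst (⟨p, hp⟩ : S)).symm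
      _ ≤ ENat.card K ^ n := enatCard_le_pow_of_rank_le h

end Cardinality

section Periodic

variable {R : Type u} {ι : Type w} {M : Type v} [Ring R] [Preorder ι] [AddCommGroup M] [Module R M]

/-- A set `H` of vectors indexed by `ι` is periodic with period space `W` if, once the coordinates
before `j` are prescribed, the `j`-th coordinates of the points of `H` lie in a single coset of `W`.
The prefix is prescribed by a full vector `a`, of which only the coordinates before `j` matter. -/
def IsPeriodic (W : Submodule R M) (H : Set (ι → M)) : Prop :=
  ∀ (j : ι) (a : ι → M), ∃ v : M, ∀ x ∈ H, (∀ i < j, x i = a i) → x j - v ∈ W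

namespace IsPeriodic

variable {W : Submodule R M}

theorem sub_apply_mem {H : Set (ι → M)} (hH : IsPeriodic W H) {x y : ι → M}
    (hx : x ∈ H) (hy : y ∈ H) {j : ι} (hxy : ∀ i < j, x i = y i) : x j - y j ∈ W := by
  obtain ⟨v, hv⟩ := hH j y
  simpa only [sub_sub_sub_cancel_right] using W.sub_mem (hv x hx hxy) (hv y hy fun _ _ => rfl)

variable {H : AffineSubspace R (ι → M)}

theorem leading_mem_of_mem_direction (hH : IsPeriodic W (H : Set (ι → M))) {d : ι → M}
    (hd : d ∈ H.direction) {j : ι} (hdj : ∀ i < j, d i = 0) : d j ∈ W := by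
  obtain rfl | hne := H.eq_bot_or_nonempty
  · obtain rfl : d = 0 := by simpa using hd
    exact W.zero_mem
  · obtain ⟨x, hx, y, hy, rfl⟩ := (H.mem_direction_iff_eq_vsub hne d).mp hd
    exact hH.sub_apply_mem hx hy fun i hi => sub_eq_zero.mp (hdj i hi)

theorem rank_direction_inf_pi_le [HasRankNullity.{max v w} R] [Fintype ι]
    (hH : IsPeriodic W (H : Set (ι → M))) (Hs : ι → Submodule R M) :
    Module.rank R (H ⊓ (Submodule.pi Set.univ Hs).toAffineSubspace).direction ≤
      lift.{w} (∑ j, Module.rank R ↥(W ⊓ Hs j)) := by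
  refine rank_le_sum_rank_of_leading_mem _ fun d hd j hdj => ?_
  obtain ⟨hdH, hdHs⟩ := AffineSubspace.direction_inf _ _ hd
  rw [Submodule.toAffineSubspace_direction] at hdHs
  exact ⟨hH.leading_mem_of_mem_direction hdH hdj, hdHs j (Set.mem_univ j)⟩

end IsPeriodic

end Periodic

theorem stmt_3_general {K : Type u} {V : Type v} {ι : Type w} [DivisionRing K] [AddCommGroup V]
    [Module K V] [Fintype ι] [Preorder ι] (A : ℕ) (H : AffineSubspace K (ι → V))
    (W : Submodule K V) (hper : IsPeriodic W (H : Set (ι → V))) (Hs : ι → Submodule K V)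
    (hA : ∑ j, Module.rank K ↥(W ⊓ Hs j) ≤ A) :
    (((H : Set (ι → V)) ∩ {x | ∀ j, x j ∈ Hs j}).Nonempty →
      ∃ (L : Submodule K (ι → V)) (v : ι → V), Module.rank K L ≤ A ∧
        (H : Set (ι → V)) ∩ {x | ∀ j, x j ∈ Hs j} = {x | x - v ∈ L}) ∧
    ((H : Set (ι → V)) ∩ {x | ∀ j, x j ∈ Hs j}).encard ≤ ENat.card K ^ A := by
  let S := H ⊓ (Submodule.pi Set.univ Hs).toAffineSubspace
  have hS : (H : Set (ι → V)) ∩ {x | ∀ j, x j ∈ Hs j} = S := by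
    ext
    simp [S, AffineSubspace.mem_inf_iff]
  have hrank : Module.rank K S.direction ≤ A :=
    (hper.rank_direction_inf_pi_le Hs).trans (lift_le_nat_iff.mpr hA)
  rw [hS]
  refine ⟨fun ⟨p, hp⟩ => ⟨S.direction, p, hrank, ?_⟩,
    encard_affineSubspace_le_pow_of_rank_direction_le hrank⟩
  exact Set.ext fun x => (S.vsub_right_mem_direction_iff_mem hp x).symm

/-- Let `q = h^t` and let `H ⊆ F_q^{mk}` (identified with
`Fin k → Fin m → F_q`) be an `(s,m,k)`-periodic affine subspace, witnessed by an
`F_q`-subspace `W ⊆ F_q^m` with `dim_{F_q} W ≤ s`. Let `H_1, …, H_k` be `F_h`-subspaces of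
`F_q^m` with `Σ_j dim_{F_h}(W' ∩ H_j) ≤ A` for every `F_q`-subspace `W'` of dimension
`≤ s`. Then `H ∩ (H_1 × ⋯ × H_k)`, if nonempty, is a coset of an `F_h`-subspace of
`F_h`-dimension `≤ A`; in particular it has at most `h^A` elements. -/
theorem stmt_3 (Fh Fq : Type) [Field Fh] [Fintype Fh] [Field Fq] [Fintype Fq]
    [Algebra Fh Fq] (t : ℕ) (ht : 1 ≤ t)
    (hq : Fintype.card Fq = Fintype.card Fh ^ t)
    (s m k A : ℕ) (hs : 0 < s) (hm : 0 < m) (hk : 0 < k)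
    (H : Set (Fin k → Fin m → Fq))
    (haff : ∃ (H₀ : Submodule Fq (Fin k → Fin m → Fq)) (x₀ : Fin k → Fin m → Fq),
      H = {x | x - x₀ ∈ H₀})
    (W : Submodule Fq (Fin m → Fq)) (hWdim : Module.finrank Fq W ≤ s)
    (hper : ∀ (j : Fin k) (a : Fin k → Fin m → Fq), ∃ v : Fin m → Fq,
      ∀ x ∈ H, (∀ j' : Fin k, j' < j → x j' = a j') → x j - v ∈ W)
    (Hs : Fin k → Submodule Fh (Fin m → Fq))
    (hdesign : ∀ W' : Submodule Fq (Fin m → Fq), Module.finrank Fq W' ≤ s →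
      ∑ j : Fin k, Module.finrank Fh ↥((W'.restrictScalars Fh) ⊓ Hs j) ≤ A) :
    ((H ∩ {x | ∀ j, x j ∈ Hs j}).Nonempty →
      ∃ (L : Submodule Fh (Fin k → Fin m → Fq)) (v : Fin k → Fin m → Fq),
        Module.finrank Fh L ≤ A ∧
        H ∩ {x | ∀ j, x j ∈ Hs j} = {x | x - v ∈ L}) ∧
    Nat.card ↥(H ∩ {x | ∀ j, x j ∈ Hs j}) ≤ Fintype.card Fh ^ A := by
  obtain ⟨H₀, x₀, rfl⟩ := haff
  obtain ⟨hcoset, hcard⟩ := stmt_3_general A (AffineSubspace.mk' x₀ (H₀.restrictScalars Fh))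
    (W.restrictScalars Fh) hper Hs (by simpa [← finrank_eq_rank] using mod_cast hdesign W hWdim)
  rw [ENat.card_eq_coe_fintype_card, ← Nat.cast_pow] at hcard
  refine ⟨fun hne => ?_, ENat.toNat_le_of_le_natCast hcard⟩
  obtain ⟨L, v, hL, hLv⟩ := hcoset hne
  exact ⟨L, v, finrank_le_of_rank_le hL, hLv⟩
end

section
/- Let q be a prime power, let 1 ≤ s ≤ m be integers, let γ_1,…,γ_m be distinct elements of F_q^*, and let d_1 > d_2 > ⋯ > d_m ≥ 1 be integers. For i = 1,…,s define f_i(x_1,…,x_m) = Σ_{j=1}^m γ_j^i · x_j^{d_j}, and let V = {x ∈ (F̄_q)^m : f_1(x) = ⋯ = f_s(x) = 0}, where F̄_q is an algebraic closure of F_q. Then for every affine subspace H ⊆ (F̄_q)^m of dimension s, |V ∩ H| ≤ (d_1)^s. -/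
/-! The affine functions on `H` form a space of dimension `s + 1`, so by selecting coordinates in
decreasing order of `d_j` one finds at most `s` *pivots* such that every other coordinate `x_j` is,
on `H`, an affine combination of the pivots `x_p` with `d_p > d_j`. Since the `γ_j` are distinct and
nonzero, the equations can be solved for the pivot powers: on `V`, each `x_p ^ d_p` is a
combination of the powers `x_j ^ d_j` of the other coordinates. Now give `x_j` a weight
proportional to `1 / d_j`. Both kinds of relations replace their left-hand side by monomials of
strictly smaller weight, so the polynomial functions on `V ∩ H` are spanned by the monomials in the
pivots with exponent of `x_p` below `d_p`. There are at most `d_1 ^ s` of these, and a finite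
dimensional algebra of functions separating points bounds the number of points. -/

section Weight

variable {R A ι : Type*} [CommSemiring R] [CommSemiring A] [Algebra R A] [Fintype ι]

variable (R) in
/-- The elements of `A` that can be written as polynomials in the family `t` of weighted degree less
than `n`, where `t i` has weight `w i`. The bound is strict so that
`t i ^ D i ∈ weightLT R t w (w i * D i)` is a rewriting rule that lowers the weight. -/
def weightLT (t : ι → A) (w : ι → ℕ) (n : ℕ) : Submodule R A :=
  Submodule.span R ((fun e : ι → ℕ => ∏ i, t i ^ e i) '' {e | w ⬝ᵥ e < n})

variable {t : ι → A} {w : ι → ℕ}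

theorem prod_pow_mem_weightLT {n : ℕ} {e : ι → ℕ} (he : w ⬝ᵥ e < n) :
    ∏ i, t i ^ e i ∈ weightLT R t w n :=
  Submodule.subset_span ⟨e, he, rfl⟩

theorem weightLT_mono {a b : ℕ} (h : a ≤ b) : weightLT R t w a ≤ weightLT R t w b :=
  Submodule.span_mono <| Set.image_mono fun _ he => lt_of_lt_of_le he h

theorem one_mem_weightLT {n : ℕ} (hn : 0 < n) : (1 : A) ∈ weightLT R t w n := by
  simpa using prod_pow_mem_weightLT (R := R) (t := t) (w := w) (e := 0) (by simpa using hn)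

theorem prod_pow_single [DecidableEq ι] (i : ι) (k : ℕ) :
    ∏ j, t j ^ (Pi.single i k : ι → ℕ) j = t i ^ k := by
  simp [Pi.single_apply]

theorem self_mem_weightLT {n : ℕ} {i : ι} (h : w i < n) : t i ∈ weightLT R t w n := by
  classical
  simpa only [prod_pow_single, pow_one] using
    prod_pow_mem_weightLT (R := R) (t := t) (e := Pi.single i 1) (by simpa using h)

theorem prod_pow_mul_mem_weightLT {n : ℕ} {x : A} (e : ι → ℕ) (hx : x ∈ weightLT R t w n) :
    (∏ i, t i ^ e i) * x ∈ weightLT R t w (w ⬝ᵥ e + n) := by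
  suffices weightLT R t w n ≤
      (weightLT R t w (w ⬝ᵥ e + n)).comap (LinearMap.mulLeft R (∏ i, t i ^ e i)) from this hx
  refine Submodule.span_le.2 ?_
  rintro _ ⟨f, hf, rfl⟩
  have h : w ⬝ᵥ (e + f) < w ⬝ᵥ e + n := by
    rw [dotProduct_add]
    exact Nat.add_lt_add_left hf _
  simpa [pow_add, Finset.prod_mul_distrib] using prod_pow_mem_weightLT (R := R) (t := t) h

theorem mul_mem_weightLT {a b : ℕ} {x y : A} (hx : x ∈ weightLT R t w a)
    (hy : y ∈ weightLT R t w b) : x * y ∈ weightLT R t w (a + b) := by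
  suffices weightLT R t w a ≤ (weightLT R t w (a + b)).comap (LinearMap.mulRight R y) from this hx
  refine Submodule.span_le.2 ?_
  rintro _ ⟨e, he, rfl⟩
  exact weightLT_mono (Nat.add_le_add_right (le_of_lt he) b) (prod_pow_mul_mem_weightLT e hy)

theorem pow_mem_weightLT {a k : ℕ} {x : A} (hk : k ≠ 0) (hx : x ∈ weightLT R t w a) :
    x ^ k ∈ weightLT R t w (a * k) := by
  induction k, Nat.one_le_iff_ne_zero.2 hk using Nat.le_induction with
  | base => simpa using hx
  | succ k hk' ih =>
    simpa only [pow_succ, mul_add, mul_one] using mul_mem_weightLT (ih (by lia)) hx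

variable {D : ι → ℕ}

theorem prod_pow_mem_span_of_pow_mem_weightLT (h : ∀ i, t i ^ D i ∈ weightLT R t w (w i * D i))
    (e : ι → ℕ) :
    ∏ i, t i ^ e i ∈
      Submodule.span R (Set.range fun f : ∀ i, Fin (D i) => ∏ i, t i ^ (f i : ℕ)) := by
  classical
  induction hn : w ⬝ᵥ e using Nat.strong_induction_on generalizing e with
  | _ n ih =>
    by_cases he : ∀ i, e i < D i
    · exact Submodule.subset_span ⟨fun i => ⟨e i, he i⟩, rfl⟩
    push Not at he
    obtain ⟨k, hk⟩ := he
    obtain ⟨g, rfl⟩ : ∃ g : ι → ℕ, e = g + Pi.single k (D k) :=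
      ⟨e - Pi.single k (D k),
        (tsub_add_cancel_of_le (update_le_iff.2 ⟨hk, fun _ _ => Nat.zero_le _⟩)).symm⟩
    have hlower : ∏ i, t i ^ (g + Pi.single k (D k) : ι → ℕ) i ∈ weightLT R t w n := by
      simpa only [← hn, Pi.add_apply, pow_add, Finset.prod_mul_distrib, prod_pow_single,
        dotProduct_add, dotProduct_single] using prod_pow_mul_mem_weightLT g (h k)
    refine Submodule.span_le.2 ?_ hlower
    rintro _ ⟨f, hf, rfl⟩
    exact ih _ hf f rfl

theorem adjoin_range_le_span_of_pow_mem_weightLT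
    (h : ∀ i, t i ^ D i ∈ weightLT R t w (w i * D i)) :
    Subalgebra.toSubmodule (Algebra.adjoin R (Set.range t)) ≤
      Submodule.span R (Set.range fun f : ∀ i, Fin (D i) => ∏ i, t i ^ (f i : ℕ)) := by
  rw [Algebra.adjoin_eq_span, Submodule.span_le]
  intro x hx
  obtain ⟨e, rfl⟩ := Submonoid.exists_of_mem_closure_range t x hx
  exact prod_pow_mem_span_of_pow_mem_weightLT h e

end Weight

section DiagonalSystem

variable {K A ι : Type*} [Field K] [CommRing A] [Algebra K A]

theorem finite_and_finrank_adjoin_range_le_prod [Fintype ι] {t : ι → A} {w D : ι → ℕ}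
    (h : ∀ i, t i ^ D i ∈ weightLT K t w (w i * D i)) :
    Module.Finite K (Algebra.adjoin K (Set.range t)) ∧
      Module.finrank K (Algebra.adjoin K (Set.range t)) ≤ ∏ i, D i := by
  classical
  have hle := adjoin_range_le_span_of_pow_mem_weightLT h
  have := Module.Finite.span_of_finite K
    (Set.finite_range fun f : ∀ i, Fin (D i) => ∏ i, t i ^ (f i : ℕ))
  refine ⟨Submodule.finiteDimensional_of_le hle, (Submodule.finrank_mono hle).trans ?_⟩
  exact (finrank_range_le_card _).trans_eq (by simp)

theorem exists_weight_mul_eq [Finite ι] {d : ι → ℕ} (hd : ∀ j, 1 ≤ d j) :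
    ∃ (w : ι → ℕ) (M : ℕ), (∀ j, 0 < w j) ∧ ∀ j, w j * d j = M := by
  classical
  cases nonempty_fintype ι
  exact ⟨fun j => ∏ k ∈ Finset.univ.erase j, d k, ∏ k, d k,
    fun _ => Finset.prod_pos fun k _ => hd k,
    fun j => Finset.prod_erase_mul _ _ (Finset.mem_univ j)⟩

theorem finite_and_finrank_adjoin_range_le_prod_pivots [Finite ι] {X : ι → A} {d : ι → ℕ}
    (hd : ∀ j, 1 ≤ d j) {P : Finset ι}
    (hlin : ∀ j ∉ P, X j ∈ Submodule.span K (insert 1 (X '' {p | p ∈ P ∧ d j < d p})))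
    (hpow : ∀ p ∈ P, X p ^ d p ∈ Submodule.span K ((fun j => X j ^ d j) '' (P : Set ι)ᶜ)) :
    Module.Finite K (Algebra.adjoin K (Set.range X)) ∧
      Module.finrank K (Algebra.adjoin K (Set.range X)) ≤ ∏ p ∈ P, d p := by
  classical
  cases nonempty_fintype ι
  obtain ⟨w, M, hw, hwd⟩ := exists_weight_mul_eq hd
  have hw_anti {j p : ι} (h : d j < d p) : w p < w j := by
    by_contra! hle
    exact (Nat.mul_lt_mul_of_le_of_lt hle h (hw p)).ne ((hwd j).trans (hwd p).symm)
  have hX : ∀ j ∉ P, X j ∈ weightLT K X w (w j) := fun j hj => by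
    refine Submodule.span_le.2 (Set.insert_subset (one_mem_weightLT (hw j)) ?_) (hlin j hj)
    rintro _ ⟨p, ⟨-, hp⟩, rfl⟩
    exact self_mem_weightLT (hw_anti hp)
  have hXpow : ∀ p ∈ P, X p ^ d p ∈ weightLT K X w (w p * d p) := fun p hp => by
    refine Submodule.span_le.2 ?_ (hpow p hp)
    rintro _ ⟨j, hj, rfl⟩
    rw [hwd p, ← hwd j]
    exact pow_mem_weightLT (Nat.one_le_iff_ne_zero.1 (hd j)) (hX j hj)
  -- Exponents less than `1` eliminate the non-pivots from the spanning monomials.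
  have hD : ∀ i, X i ^ (if i ∈ P then d i else 1) ∈
      weightLT K X w (w i * if i ∈ P then d i else 1) := fun i => by
    split_ifs with hi
    · exact hXpow i hi
    · simpa using hX i hi
  simpa [Finset.prod_ite_mem] using finite_and_finrank_adjoin_range_le_prod hD

end DiagonalSystem

section Vandermonde

variable {R K M ι : Type*} [Fintype ι]

theorem sum_mul_eval_smul_eq_zero [CommSemiring R] [AddCommMonoid M] [Module R M]
    {c : ι → R} {y : ι → M} {s : ℕ}
    (h : ∀ i < s, ∑ j, c j ^ (i + 1) • y j = 0) {g : Polynomial R} (hg : g.natDegree < s) :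
    ∑ j, (c j * g.eval (c j)) • y j = 0 := by
  calc ∑ j, (c j * g.eval (c j)) • y j
      = ∑ j, ∑ i ∈ Finset.range s, g.coeff i • c j ^ (i + 1) • y j := by
        refine Finset.sum_congr rfl fun j _ => ?_
        rw [Polynomial.eval_eq_sum_range' hg, Finset.mul_sum, Finset.sum_smul]
        exact Finset.sum_congr rfl fun i _ => by rw [smul_smul]; ring_nf
    _ = ∑ i ∈ Finset.range s, g.coeff i • ∑ j, c j ^ (i + 1) • y j := by
        rw [Finset.sum_comm]
        simp only [Finset.smul_sum]
    _ = 0 := Finset.sum_eq_zero fun i hi => by rw [h i (Finset.mem_range.1 hi), smul_zero]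

theorem mem_span_image_compl_of_sum_pow_smul_eq_zero [Field K] [AddCommGroup M] [Module K M]
    {c : ι → K} {y : ι → M} {s : ℕ} (h : ∀ i < s, ∑ j, c j ^ (i + 1) • y j = 0) {P : Finset ι}
    (hPs : P.card ≤ s) (hc : Set.InjOn c P) {p : ι} (hp : p ∈ P) (hcp : c p ≠ 0) :
    y p ∈ Submodule.span K (y '' (P : Set ι)ᶜ) := by
  classical
  let g := Lagrange.basis P c p
  have hdeg : g.natDegree < s := by
    have := Finset.card_pos.2 ⟨p, hp⟩
    rw [Lagrange.natDegree_basis hc hp]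
    lia
  have hsumP : ∑ j ∈ P, (c j * g.eval (c j)) • y j = c p • y p := by
    rw [Finset.sum_eq_single_of_mem p hp, Lagrange.eval_basis_self hc hp, mul_one]
    intro k hk hkp
    rw [Lagrange.eval_basis_of_ne hkp.symm hk, mul_zero, zero_smul]
  have hsolve : c p • y p = -∑ j ∈ Pᶜ, (c j * g.eval (c j)) • y j := by
    rw [← hsumP, ← add_eq_zero_iff_eq_neg, Finset.sum_add_sum_compl]
    exact sum_mul_eval_smul_eq_zero h hdeg
  rw [← Submodule.smul_mem_iff _ hcp, hsolve]
  exact Submodule.neg_mem _ <| Submodule.sum_mem _ fun j hj =>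
    Submodule.smul_mem _ _ <| Submodule.subset_span <| Set.mem_image_of_mem y (by simpa using hj)

end Vandermonde

theorem exists_linearIndepOn_forall_mem_span_of_le {K V ι α : Type*} [DivisionRing K]
    [AddCommGroup V] [Module K V] [LinearOrder α] (φ : ι → V) (f : ι → α) (s : Finset ι) :
    ∃ P ⊆ s, LinearIndepOn K φ (P : Set ι) ∧
      ∀ j ∈ s, j ∉ P → φ j ∈ Submodule.span K (φ '' {p | p ∈ P ∧ f j ≤ f p}) := by
  classical
  induction s using Finset.induction_on_min_value f with
  | empty => exact ⟨∅, by simp, by simp, by simp⟩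
  | insert a s _ has ih =>
    obtain ⟨P, hPs, hP, hspan⟩ := ih
    by_cases ha : φ a ∈ Submodule.span K (φ '' (P : Set ι))
    · refine ⟨P, hPs.trans (Finset.subset_insert _ _), hP, fun j hj hjP => ?_⟩
      rcases Finset.mem_insert.1 hj with rfl | hj
      · refine Submodule.span_mono (Set.image_mono fun p hp => ?_) ha
        exact ⟨hp, has p (hPs hp)⟩
      · exact hspan j hj hjP
    · refine ⟨insert a P, Finset.insert_subset_insert _ hPs, ?_, fun j hj hjP => ?_⟩
      · rw [Finset.coe_insert]
        exact hP.insert ha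
      · rw [Finset.mem_insert, not_or] at hjP
        refine Submodule.span_mono (Set.image_mono fun p hp => ?_)
          (hspan j ((Finset.mem_insert.1 hj).resolve_left hjP.1) hjP.2)
        exact ⟨Finset.mem_insert_of_mem hp.1, hp.2⟩

theorem finite_and_natCard_le_finrank_of_separatesPoints {K S : Type*} [Field K]
    {B : Subalgebra K (S → K)} [Module.Finite K B] (hB : (B : Set (S → K)).SeparatesPoints) :
    Finite S ∧ Nat.card S ≤ Module.finrank K B := by
  let ev : S → (B →ₐ[K] K) := fun x => (Pi.evalAlgHom K (fun _ : S => K) x).comp B.val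
  have hev : Function.Injective ev := fun x y hxy => by
    by_contra hne
    obtain ⟨f, hf, hfxy⟩ := hB hne
    exact hfxy (DFunLike.congr_fun hxy ⟨f, hf⟩)
  exact ⟨Finite.of_injective ev hev,
    (Nat.card_le_card_of_injective ev hev).trans (card_algHom_le_finrank K B K)⟩

section Coordinates

variable {K ι : Type*}

/-- The `j`-th coordinate function on a set `S` of points of affine space. -/
def coordOn (S : Set (ι → K)) (j : ι) : S → K :=
  fun x => x.1 j

variable {S : Set (ι → K)}

theorem separatesPoints_adjoin_range_coordOn [CommSemiring K] :
    (Algebra.adjoin K (Set.range (coordOn S)) : Set (S → K)).SeparatesPoints := fun x y hxy => by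
  obtain ⟨j, hj⟩ := Function.ne_iff.1 (Subtype.coe_injective.ne hxy)
  exact ⟨coordOn S j, Algebra.subset_adjoin ⟨j, rfl⟩, hj⟩

theorem coordOn_mem_span_insert_one [CommRing K] {W : Submodule K (ι → K)} {v : ι → K}
    (hS : ∀ x ∈ S, x - v ∈ W) {T : Set ι} {j : ι}
    (h : W.dualRestrict (LinearMap.proj j) ∈
      Submodule.span K ((fun p => W.dualRestrict (LinearMap.proj p)) '' T)) :
    coordOn S j ∈ Submodule.span K (insert 1 (coordOn S '' T)) := by
  let L : Module.Dual K W →ₗ[K] (S → K) :=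
    LinearMap.pi fun x => Module.Dual.eval K W ⟨x.1 - v, hS x.1 x.2⟩
  have hL : ∀ p, coordOn S p = L (W.dualRestrict (LinearMap.proj p)) + v p • (1 : S → K) :=
    fun p => by ext x; simp [L, coordOn]
  set F := Submodule.span K (insert 1 (coordOn S '' T))
  have hone (p : ι) : v p • (1 : S → K) ∈ F :=
    F.smul_mem _ (Submodule.subset_span (Set.mem_insert _ _))
  have hle : Submodule.span K ((fun p => W.dualRestrict (LinearMap.proj p)) '' T) ≤ F.comap L := by
    refine Submodule.span_le.2 ?_
    rintro _ ⟨p, hp, rfl⟩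
    have hmem : coordOn S p ∈ F :=
      Submodule.subset_span (Set.mem_insert_of_mem _ (Set.mem_image_of_mem _ hp))
    rw [hL p] at hmem
    exact (F.add_mem_iff_left (hone p)).1 hmem
  rw [hL j]
  exact F.add_mem (hle h) (hone j)

theorem exists_pivots_coordOn_mem_span [Field K] [Finite ι] {α : Type*} [LinearOrder α] {f : ι → α}
    (hf : Function.Injective f) {W : Submodule K (ι → K)} {v : ι → K} (hS : ∀ x ∈ S, x - v ∈ W) :
    ∃ P : Finset ι, P.card ≤ Module.finrank K W ∧ ∀ j ∉ P,
      coordOn S j ∈ Submodule.span K (insert 1 (coordOn S '' {p | p ∈ P ∧ f j < f p})) := by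
  cases nonempty_fintype ι
  obtain ⟨P, -, hP, hspan⟩ := exists_linearIndepOn_forall_mem_span_of_le (K := K)
    (fun j => W.dualRestrict (LinearMap.proj j)) f Finset.univ
  refine ⟨P, ?_, fun j hj => coordOn_mem_span_insert_one hS ?_⟩
  · simpa [Subspace.dual_finrank_eq] using hP.linearIndependent.fintype_card_le_finrank
  · refine Submodule.span_mono (Set.image_mono fun p hp => ?_) (hspan j (Finset.mem_univ j) hj)
    exact ⟨hp.1, hp.2.lt_of_ne (hf.ne (ne_of_mem_of_not_mem hp.1 hj).symm)⟩

end Coordinates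

theorem stmt_6_general {K ι : Type*} [Field K] [Fintype ι] {c : ι → K}
    (hc : Function.Injective c) (hc0 : ∀ j, c j ≠ 0) {d : ι → ℕ} (hd : Function.Injective d)
    (hd1 : ∀ j, 1 ≤ d j) {N : ℕ} (hN : ∀ j, d j ≤ N) (W : Submodule K (ι → K)) (v : ι → K) :
    ({x : ι → K | ∀ i : Fin (Module.finrank K W), ∑ j, c j ^ ((i : ℕ) + 1) * x j ^ d j = 0}
      ∩ {x | x - v ∈ W}).Finite ∧
    Nat.card ↥({x : ι → K | ∀ i : Fin (Module.finrank K W),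
        ∑ j, c j ^ ((i : ℕ) + 1) * x j ^ d j = 0}
      ∩ {x | x - v ∈ W}) ≤ N ^ Module.finrank K W := by
  set S := {x : ι → K | ∀ i : Fin (Module.finrank K W), ∑ j, c j ^ ((i : ℕ) + 1) * x j ^ d j = 0}
    ∩ {x | x - v ∈ W}
  obtain ⟨P, hPcard, hlin⟩ := exists_pivots_coordOn_mem_span (S := S) hd fun x hx => hx.2
  have heq : ∀ i < Module.finrank K W, ∑ j, c j ^ (i + 1) • coordOn S j ^ d j = 0 :=
    fun i hi => by
      ext x
      simpa [coordOn] using x.2.1 ⟨i, hi⟩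
  obtain ⟨_, hrank⟩ := finite_and_finrank_adjoin_range_le_prod_pivots hd1 hlin fun p hp =>
    mem_span_image_compl_of_sum_pow_smul_eq_zero heq hPcard hc.injOn hp (hc0 p)
  obtain ⟨hfin, hcard⟩ :=
    finite_and_natCard_le_finrank_of_separatesPoints (separatesPoints_adjoin_range_coordOn (S := S))
  refine ⟨hfin, hcard.trans (hrank.trans ?_)⟩
  rcases isEmpty_or_nonempty ι with _ | ⟨⟨j⟩⟩
  · simp [Finset.eq_empty_of_isEmpty P, Module.finrank_zero_of_subsingleton]
  · exact (Finset.prod_le_pow_card P d N fun p _ => hN p).trans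
      (Nat.pow_le_pow_right ((hd1 j).trans (hN j)) hPcard)

/-- Dvir–Lovett. Let `q` be a prime power, `1 ≤ s ≤ m`, `γ_1, …, γ_m`
distinct elements of `F_q^*`, and `d_1 > d_2 > ⋯ > d_m ≥ 1`. Define
`f_i(x) = Σ_j γ_j^i x_j^{d_j}` for `i = 1, …, s`, and let `V` be their common zero set in
`(F̄_q)^m`. Then `|V ∩ H| ≤ d_1^s` for every affine subspace `H ⊆ (F̄_q)^m` of dimension
`s` (a coset `v + W` of an `s`-dimensional subspace `W`). -/
theorem stmt_6 (Fq : Type) [Field Fq] [Fintype Fq] (s m : ℕ) (hs : 1 ≤ s) (hsm : s ≤ m)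
    (γ : Fin m → Fq) (hγinj : Function.Injective γ) (hγ0 : ∀ j, γ j ≠ 0)
    (d : Fin m → ℕ) (hd : StrictAnti d) (hd1 : ∀ j, 1 ≤ d j) (hm : 0 < m)
    (W : Submodule (AlgebraicClosure Fq) (Fin m → AlgebraicClosure Fq))
    (hW : Module.finrank (AlgebraicClosure Fq) W = s) (v : Fin m → AlgebraicClosure Fq) :
    ({x : Fin m → AlgebraicClosure Fq | ∀ i : Fin s,
        ∑ j, (algebraMap Fq (AlgebraicClosure Fq) (γ j)) ^ ((i : ℕ) + 1) * x j ^ d j = 0}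
      ∩ {x | x - v ∈ W}).Finite ∧
    Nat.card ↥({x : Fin m → AlgebraicClosure Fq | ∀ i : Fin s,
        ∑ j, (algebraMap Fq (AlgebraicClosure Fq) (γ j)) ^ ((i : ℕ) + 1) * x j ^ d j = 0}
      ∩ {x | x - v ∈ W}) ≤ d ⟨0, hm⟩ ^ s := by
  subst hW
  have hinj := (algebraMap Fq (AlgebraicClosure Fq)).injective
  exact stmt_6_general (hinj.comp hγinj) (fun j => (map_ne_zero_iff _ hinj).2 (hγ0 j)) hd.injective
    hd1 (fun j => hd.antitone (Fin.mk_le_of_le_val (Nat.zero_le _))) W v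
end

section
/- Let q be a prime power, let 1 ≤ s ≤ m be integers, let γ_1,…,γ_m be distinct elements of F_q^*, and let d_1 > d_2 > ⋯ > d_m ≥ 1 be integers such that at least s of d_1,…,d_m are coprime to q−1. For i = 1,…,s define f_i(x_1,…,x_m) = Σ_{j=1}^m γ_j^i · x_j^{d_j}. Then the number of points x ∈ F_q^m with f_1(x) = ⋯ = f_s(x) = 0 is exactly q^{m−s}. -/
/-!
The monomials `x j ^ d j` with `d j` coprime to `q - 1` permute the field. Choosing `s` such
coordinates, prescribe all the others arbitrarily: the equations become a Vandermonde system with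
`s` distinct nonzero nodes in the remaining `s` monomials, so these, and hence the chosen
coordinates, are uniquely determined. The common zeros are therefore in bijection with the
assignments of the other `m - s` coordinates.
-/

open Function

theorem pow_bijective_of_coprime_card_sub_one {G : Type*} [GroupWithZero G] [Finite G] {n : ℕ}
    (hn : n ≠ 0) (hcop : n.Coprime (Nat.card G - 1)) : Bijective fun x : G => x ^ n := by
  refine Finite.injective_iff_bijective.mp fun x y (hxy : x ^ n = y ^ n) => ?_
  have hzero : x = 0 ↔ y = 0 := by rw [← pow_eq_zero_iff hn, hxy, pow_eq_zero_iff hn]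
  by_cases hx : x = 0
  · rw [hx, hzero.mp hx]
  · have hunits : (Nat.card Gˣ).Coprime n := by rwa [Nat.card_units, Nat.coprime_comm]
    have hxy' : Units.mk0 x hx = Units.mk0 y (hzero.not.mp hx) :=
      hunits.pow_left_bijective.injective (Units.ext (by simpa using hxy))
    exact congrArg Units.val hxy'

theorem eq_zero_of_forall_sum_pow_succ_mul_eq_zero {R κ : Type*} [CommRing R] [IsDomain R]
    [Fintype κ] {γ c : κ → R} (hγ : Injective γ) (hγ0 : ∀ k, γ k ≠ 0)
    (h : ∀ i : Fin (Fintype.card κ), ∑ k, γ k ^ ((i : ℕ) + 1) * c k = 0) : c = 0 := by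
  let e := Fintype.equivFin κ
  have hvandermonde : (fun l => γ (e.symm l) * c (e.symm l)) = 0 := by
    refine Matrix.eq_zero_of_forall_pow_sum_mul_pow_eq_zero (hγ.comp e.symm.injective) fun i => ?_
    rw [← h i, ← e.symm.sum_comp]
    exact Finset.sum_congr rfl fun l _ => by simp only [comp_apply]; ring
  funext k
  have hk : γ k * c k = 0 := by simpa using congrFun hvandermonde (e k)
  exact (mul_eq_zero.mp hk).resolve_left (hγ0 k)

theorem bijective_sum_pow_succ_mul {K κ : Type*} [Field K] [Fintype κ] {s : ℕ}
    (hs : Fintype.card κ = s) {γ : κ → K} (hγ : Injective γ) (hγ0 : ∀ k, γ k ≠ 0) :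
    Bijective fun (c : κ → K) (i : Fin s) => ∑ k, γ k ^ ((i : ℕ) + 1) * c k := by
  subst hs
  let L := (Matrix.of fun (i : Fin (Fintype.card κ)) k => γ k ^ ((i : ℕ) + 1)).mulVecLin
  have hL : Injective L := (injective_iff_map_eq_zero L).mpr fun c hc =>
    eq_zero_of_forall_sum_pow_succ_mul_eq_zero hγ hγ0 (congrFun hc)
  exact ⟨hL, (LinearMap.injective_iff_surjective_of_finrank_eq_finrank (by simp)).mp hL⟩

theorem card_add_eq_zero_of_bijective {A B V : Type*} [AddGroup V] {f : A → V} (hf : Bijective f)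
    (g : B → V) : Nat.card {p : A × B // f p.1 + g p.2 = 0} = Nat.card B := by
  refine Nat.card_eq_of_bijective (fun p => p.1.2) ⟨?_, fun b => ?_⟩
  · rintro ⟨⟨a, b⟩, hab⟩ ⟨⟨a', _⟩, hab'⟩ rfl
    have haa' : a = a' := hf.injective (add_right_cancel (hab.trans hab'.symm))
    simp only [haa']
  · obtain ⟨a, ha⟩ := hf.surjective (-g b)
    exact ⟨⟨(a, b), add_eq_zero_iff_eq_neg.mpr ha⟩, rfl⟩

theorem card_sum_eq_zero_of_bijective_sum_coe {ι V : Type*} {α : ι → Type*} [Fintype ι]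
    [AddCommGroup V] (φ : ∀ j, α j → V) (S : Finset ι)
    (hφ : Bijective fun u : ∀ j : S, α j => ∑ j : S, φ j (u j)) :
    Nat.card {x : ∀ j, α j // ∑ j, φ j (x j) = 0} = Nat.card (∀ j : {j // j ∉ S}, α j) := by
  classical
  have hsplit (x : ∀ j, α j) :
      ∑ j, φ j (x j) = ∑ j : S, φ j (x j) + ∑ j : {j // j ∉ S}, φ j (x j) := by
    rw [← Fintype.sum_subtype_add_sum_subtype (· ∈ S)]
    congr!
  let sumOff (w : ∀ j : {j // j ∉ S}, α j) : V := ∑ j : {j // j ∉ S}, φ j (w j)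
  rw [← card_add_eq_zero_of_bijective hφ sumOff]
  exact Nat.card_congr ((Equiv.piEquivPiSubtypeProd (· ∈ S) α).subtypeEquiv fun x => by
    rw [hsplit]; rfl)

theorem card_zeros_sum_pow_succ_mul {K ι : Type*} [Field K] [Fintype ι] {γ : ι → K}
    (g : ι → K → K) (S : Finset ι) (hγ : Set.InjOn γ S) (hγ0 : ∀ j ∈ S, γ j ≠ 0)
    (hg : ∀ j ∈ S, Bijective (g j)) :
    Nat.card {x : ι → K // ∀ i : Fin S.card, ∑ j, γ j ^ ((i : ℕ) + 1) * g j (x j) = 0} =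
      Nat.card K ^ (Fintype.card ι - S.card) := by
  classical
  let φ (j : ι) (t : K) (i : Fin S.card) : K := γ j ^ ((i : ℕ) + 1) * g j t
  have hφ : Bijective fun u : S → K => ∑ j : S, φ j (u j) := by
    have hsolve := (bijective_sum_pow_succ_mul (Fintype.card_coe S) hγ.injective
      fun j => hγ0 j j.2).comp (Bijective.piMap fun j : S => hg j j.2)
    convert hsolve using 1
    ext u i
    simp [φ]
  calc
    _ = Nat.card {x : ι → K // ∑ j, φ j (x j) = 0} := by
      simp only [funext_iff, Finset.sum_apply, Pi.zero_apply, φ]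
    _ = Nat.card ({j // j ∉ S} → K) := card_sum_eq_zero_of_bijective_sum_coe φ S hφ
    _ = Nat.card K ^ (Fintype.card ι - S.card) := by
      rw [Nat.card_fun, Nat.card_eq_fintype_card (α := {j // j ∉ S}), Fintype.card_subtype_compl,
        Fintype.card_coe]

theorem stmt_7_general {K ι : Type*} [Field K] [Finite K] [Fintype ι] {s : ℕ} {γ : ι → K}
    {d : ι → ℕ} (T : Finset ι) (hT : s ≤ T.card) (hγ : Set.InjOn γ T) (hγ0 : ∀ j ∈ T, γ j ≠ 0)
    (hd : ∀ j ∈ T, d j ≠ 0) (hcop : ∀ j ∈ T, (d j).Coprime (Nat.card K - 1)) :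
    Nat.card {x : ι → K // ∀ i : Fin s, ∑ j, γ j ^ ((i : ℕ) + 1) * x j ^ d j = 0} =
      Nat.card K ^ (Fintype.card ι - s) := by
  obtain ⟨S, hST, rfl⟩ := Finset.exists_subset_card_eq hT
  exact card_zeros_sum_pow_succ_mul (fun j t => t ^ d j) S (hγ.mono hST)
    (fun j hj => hγ0 j (hST hj)) fun j hj =>
      pow_bijective_of_coprime_card_sub_one (hd j (hST hj)) (hcop j (hST hj))

/-- Dvir–Lovett, rational point count. Let `q` be a prime power,
`1 ≤ s ≤ m`, `γ_1, …, γ_m` distinct elements of `F_q^*`, and `d_1 > ⋯ > d_m ≥ 1` with at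
least `s` of the `d_j` coprime to `q - 1`. Define `f_i(x) = Σ_j γ_j^i x_j^{d_j}` for
`i = 1, …, s`. Then the number of common zeros of `f_1, …, f_s` in `F_q^m` is exactly
`q^(m-s)`. -/
theorem stmt_7 (Fq : Type) [Field Fq] [Fintype Fq] (s m : ℕ) (hs : 1 ≤ s) (hsm : s ≤ m)
    (γ : Fin m → Fq) (hγinj : Function.Injective γ) (hγ0 : ∀ j, γ j ≠ 0)
    (d : Fin m → ℕ) (hd : StrictAnti d) (hd1 : ∀ j, 1 ≤ d j)
    (hcop : ∃ T : Finset (Fin m), s ≤ T.card ∧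
      ∀ j ∈ T, Nat.Coprime (d j) (Fintype.card Fq - 1)) :
    Nat.card {x : Fin m → Fq // ∀ i : Fin s,
        ∑ j, (γ j) ^ ((i : ℕ) + 1) * x j ^ d j = 0}
      = Fintype.card Fq ^ (m - s) := by
  obtain ⟨T, hT, hTcop⟩ := hcop
  simpa only [Nat.card_eq_fintype_card, Fintype.card_fin] using stmt_7_general T hT hγinj.injOn
    (fun j _ => hγ0 j) (fun j _ => Nat.one_le_iff_ne_zero.mp (hd1 j))
    (by simpa only [Nat.card_eq_fintype_card] using hTcop)
end

section
/- Let q be a prime power, let 1 ≤ s ≤ m be integers, let γ_1,…,γ_m be distinct elements of F_q^*, and let d_1 > d_2 > ⋯ > d_m ≥ 1 be integers. For i = 1,…,s define f_i(x_1,…,x_m) = Σ_{j=1}^m γ_j^i · x_j^{d_j}, and let V₀ = {x ∈ F_q^m : f_1(x) = ⋯ = f_s(x) = 0}. Let n be a multiple of m and let P = V₀ × V₀ × ⋯ × V₀ (n/m copies) ⊆ F_q^n. Then for every integer 1 ≤ k ≤ s, the set P is (k, (d_1)^k)-subspace-evasive: every F_q-linear subspace U ⊆ F_q^n of dimension k satisfies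 |U ∩ P| ≤ (d_1)^k. -/
/-!
A linear subspace meets `V₀^r` blockwise: project it to one block and look at the fibres. The
fibres are translates of subspaces and the dimensions of image and kernel add up, so a bound `d ^ k`
on the intersections of a single block with all `k`-dimensional *affine* subspaces is inherited by
products.

On an affine subspace `H` of a single block, choose pivot coordinates from left to right: there are
`dim H` of them, and every other coordinate `x_i` is an affine function of the pivots before it.
The Vandermonde structure of the equations expresses each pivot power `x_j ^ d_j` through the
non-pivot powers `x_i ^ d_i`. Give `x_j` a weight `w_j` with `w_j * d_j = D` for all `j`. The
weights increase with `j`, so a non-pivot `x_i` is a polynomial of weight less than `w_i` in the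
pivots and `x_j ^ d_j` becomes a polynomial of weight less than its own weight `D`. Rewriting with
these relations reduces the exponent of each pivot `x_j` below `d_j`. Hence the functions on
`H ∩ V₀` generated by the coordinates form an algebra of dimension at most `∏ d_j`, and points are
distinct characters of this algebra.
-/

open Module Submodule Finset

section WeightSpan

/-- The span of the monomials in the `t i` whose `w`-weighted degree is at most `n`: the `n`-th step
of the weight filtration on the algebra generated by the `t i`. -/
def weightSpan (F : Type*) {ι A : Type*} [Fintype ι] [CommSemiring F] [CommSemiring A] [Algebra F A]
    (t : ι → A) (w : ι → ℕ) (n : ℕ) : Submodule F A :=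
  span F {y | ∃ a : ι → ℕ, ∑ i, w i * a i ≤ n ∧ ∏ i, t i ^ a i = y}

variable {F ι A : Type*} [Fintype ι] [CommSemiring F] [CommSemiring A] [Algebra F A]
  {t : ι → A} {w : ι → ℕ} {n n' : ℕ}

lemma prod_pow_mem_weightSpan {a : ι → ℕ} (h : ∑ i, w i * a i ≤ n) :
    ∏ i, t i ^ a i ∈ weightSpan F t w n :=
  subset_span ⟨a, h, rfl⟩

lemma weightSpan_mono (h : n ≤ n') : weightSpan F t w n ≤ weightSpan F t w n' :=
  span_mono fun _ ⟨a, ha, hy⟩ => ⟨a, ha.trans h, hy⟩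

lemma one_mem_weightSpan : (1 : A) ∈ weightSpan F t w n := by
  simpa using prod_pow_mem_weightSpan (F := F) (t := t) (a := 0) (by simp)

lemma mem_weightSpan_of_weight_le {i : ι} (h : w i ≤ n) : t i ∈ weightSpan F t w n := by
  classical
  simpa [Pi.single_apply, pow_ite] using
    prod_pow_mem_weightSpan (F := F) (t := t) (w := w) (n := n) (a := Pi.single i 1)
      (by simpa [Pi.single_apply] using h)

lemma mul_mem_weightSpan {x y : A} (hx : x ∈ weightSpan F t w n)
    (hy : y ∈ weightSpan F t w n') : x * y ∈ weightSpan F t w (n + n') := by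
  have hxy := mul_mem_mul hx hy
  rw [weightSpan, weightSpan, span_mul_span] at hxy
  refine span_mono ?_ hxy
  rintro _ ⟨_, ⟨a, ha, rfl⟩, _, ⟨b, hb, rfl⟩, rfl⟩
  refine ⟨a + b, ?_, ?_⟩
  · simpa only [Pi.add_apply, mul_add, sum_add_distrib] using add_le_add ha hb
  · simp only [Pi.add_apply, pow_add, prod_mul_distrib]

lemma pow_mem_weightSpan {x : A} (hx : x ∈ weightSpan F t w n) (e : ℕ) :
    x ^ e ∈ weightSpan F t w (e * n) := by
  induction e with
  | zero => simpa using one_mem_weightSpan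
  | succ e ih => simpa only [pow_succ, add_mul, one_mul] using mul_mem_weightSpan ih hx

lemma exists_prod_pow_mem_weightSpan_lt {i : ι} {e : ℕ} {a : ι → ℕ} (hi : e ≤ a i)
    (h : ∃ n < w i * e, t i ^ e ∈ weightSpan F t w n) :
    ∃ n < ∑ j, w j * a j, ∏ j, t j ^ a j ∈ weightSpan F t w n := by
  classical
  obtain ⟨n, hn, hmem⟩ := h
  obtain ⟨b, rfl⟩ : ∃ b, a = b + Pi.single i e :=
    ⟨a - Pi.single i e, (tsub_add_cancel_of_le fun j => by
      rcases eq_or_ne j i with rfl | hj <;> simp [*]).symm⟩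
  have hweight : ∑ j, w j * (b + Pi.single i e : ι → ℕ) j = ∑ j, w j * b j + w i * e := by
    simp [mul_add, sum_add_distrib, Pi.single_apply]
  have hprod : ∏ j, t j ^ (b + Pi.single i e : ι → ℕ) j = (∏ j, t j ^ b j) * t i ^ e := by
    simp only [Pi.add_apply, pow_add, prod_mul_distrib]
    simp [Pi.single_apply, pow_ite]
  rw [hweight, hprod]
  exact ⟨_, by gcongr, mul_mem_weightSpan (prod_pow_mem_weightSpan le_rfl) hmem⟩

lemma prod_pow_mem_span_of_pow_mem_weightSpan {e : ι → ℕ}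
    (h : ∀ i, ∃ n < w i * e i, t i ^ e i ∈ weightSpan F t w n) (a : ι → ℕ) :
    ∏ i, t i ^ a i ∈ span F (Set.range fun b : ∀ i, Fin (e i) => ∏ i, t i ^ (b i : ℕ)) := by
  induction hN : ∑ i, w i * a i using Nat.strong_induction_on generalizing a with
  | _ N ih =>
  by_cases! hlt : ∀ i, a i < e i
  · exact subset_span ⟨fun i => ⟨a i, hlt i⟩, rfl⟩
  · obtain ⟨i, hi⟩ := hlt
    obtain ⟨n, hn, hmem⟩ := exists_prod_pow_mem_weightSpan_lt hi (h i)
    refine span_le.2 ?_ hmem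
    rintro _ ⟨c, hc, rfl⟩
    exact ih _ (hc.trans_lt (hn.trans_eq hN)) c rfl

end WeightSpan

section Adjoin

variable {F ι A : Type*} [Field F] [CommRing A] [Algebra F A]

theorem finite_and_finrank_adjoin_le_prod [Fintype ι] {t : ι → A} {w e : ι → ℕ}
    (h : ∀ i, ∃ n < w i * e i, t i ^ e i ∈ weightSpan F t w n) :
    Module.Finite F (Algebra.adjoin F (Set.range t)) ∧
      finrank F (Algebra.adjoin F (Set.range t)) ≤ ∏ i, e i := by
  classical
  let monomials : (∀ i, Fin (e i)) → A := fun b => ∏ i, t i ^ (b i : ℕ)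
  have hle : (Algebra.adjoin F (Set.range t)).toSubmodule ≤ span F (Set.range monomials) := by
    rw [Algebra.adjoin_eq_span, span_le]
    intro y hy
    obtain ⟨a, rfl⟩ := Submonoid.mem_closure_range_iff_of_fintype.1 hy
    exact prod_pow_mem_span_of_pow_mem_weightSpan h a
  have := FiniteDimensional.span_of_finite F (Set.finite_range monomials)
  refine ⟨finiteDimensional_of_le hle, (finrank_mono hle).trans ?_⟩
  simpa [Set.finrank] using finrank_range_le_card (R := F) monomials

lemma encard_le_finrank_adjoin_coordinates {κ : Type*} (S : Set (κ → F))
    [Module.Finite F (Algebra.adjoin F (Set.range fun (i : κ) (x : S) => x.1 i))] :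
    S.encard ≤ finrank F (Algebra.adjoin F (Set.range fun (i : κ) (x : S) => x.1 i)) := by
  set B := Algebra.adjoin F (Set.range fun (i : κ) (x : S) => x.1 i)
  let character : S → (B →ₐ[F] F) := fun x => (Pi.evalAlgHom F (fun _ => F) x).comp B.val
  have hinj : Function.Injective character := fun x y hxy => Subtype.ext <| funext fun i =>
    DFunLike.congr_fun hxy (⟨_, Algebra.subset_adjoin ⟨i, rfl⟩⟩ : B)
  calc S.encard ≤ ENat.card (B →ₐ[F] F) := ENat.card_le_card_of_injective hinj
    _ = Nat.card (B →ₐ[F] F) := ENat.card_eq_coe_natCard _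
    _ ≤ finrank F B := by exact_mod_cast card_algHom_le_finrank F B F

lemma strictMono_prod_erase [LinearOrder ι] [Fintype ι] {d : ι → ℕ} (hd : StrictAnti d)
    (hd1 : ∀ j, 1 ≤ d j) : StrictMono fun j => ∏ l ∈ univ.erase j, d l := fun i j hij => by
  refine lt_of_mul_lt_mul_right' (a := d i) ?_
  calc (∏ l ∈ univ.erase i, d l) * d i = (∏ l ∈ univ.erase j, d l) * d j := by
        rw [prod_erase_mul _ _ (mem_univ _), prod_erase_mul _ _ (mem_univ _)]
    _ < (∏ l ∈ univ.erase j, d l) * d i :=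
        Nat.mul_lt_mul_of_pos_left (hd hij) (prod_pos fun l _ => hd1 l)

lemma adjoin_range_eq_adjoin_image {κ : Type*} {t : κ → A} {p : Set κ}
    (h : ∀ i ∉ p, t i ∈ span F (insert 1 (t '' p))) :
    Algebra.adjoin F (Set.range t) = Algebra.adjoin F (t '' p) := by
  refine le_antisymm (Algebra.adjoin_le ?_) (Algebra.adjoin_mono (Set.image_subset_range t p))
  rintro _ ⟨i, rfl⟩
  by_cases hi : i ∈ p
  · exact Algebra.subset_adjoin ⟨i, hi, rfl⟩
  · refine (span_le (p := (Algebra.adjoin F (t '' p)).toSubmodule)).2 ?_ (h i hi)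
    exact Set.insert_subset (one_mem (Algebra.adjoin F (t '' p))) Algebra.subset_adjoin

theorem finite_and_finrank_adjoin_le_prod_pivots [LinearOrder ι] [Finite ι] {t : ι → A}
    {d : ι → ℕ} (hd : StrictAnti d) (hd1 : ∀ j, 1 ≤ d j) {p : Finset ι}
    (hnonpivot : ∀ i ∉ p, t i ∈ span F (insert 1 (t '' {j | j ∈ p ∧ j < i})))
    (hpivot : ∀ j ∈ p, t j ^ d j ∈ span F ((fun i => t i ^ d i) '' {i | i ∉ p})) :
    Module.Finite F (Algebra.adjoin F (Set.range t)) ∧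
      finrank F (Algebra.adjoin F (Set.range t)) ≤ ∏ j ∈ p, d j := by
  have := Fintype.ofFinite ι
  let w : ι → ℕ := fun j => ∏ l ∈ univ.erase j, d l
  have hw : ∀ j, w j * d j = ∏ l, d l := fun j => prod_erase_mul _ _ (mem_univ j)
  let tp : p → A := fun j => t j
  let wp : p → ℕ := fun j => w j
  have hnonpivot_lt : ∀ i ∉ p, t i ∈ weightSpan F tp wp (w i - 1) := fun i hi => by
    refine span_le.2 ?_ (hnonpivot i hi)
    rintro _ (rfl | ⟨j, ⟨hj, hji⟩, rfl⟩)
    · exact one_mem_weightSpan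
    · exact mem_weightSpan_of_weight_le (t := tp) (i := ⟨j, hj⟩)
        (Nat.le_sub_one_of_lt (strictMono_prod_erase hd hd1 hji))
  have hnonpivot_pow : ∀ i ∉ p, t i ^ d i ∈ weightSpan F tp wp (∏ l, d l - 1) := fun i hi => by
    refine weightSpan_mono ?_ (pow_mem_weightSpan (hnonpivot_lt i hi) (d i))
    rw [Nat.mul_sub_one, mul_comm, hw]
    exact Nat.sub_le_sub_left (hd1 i) _
  rw [adjoin_range_eq_adjoin_image fun i hi =>
    span_mono (Set.insert_subset_insert (Set.image_mono fun j hj => hj.1)) (hnonpivot i hi),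
    Set.image_eq_range, ← prod_coe_sort]
  refine finite_and_finrank_adjoin_le_prod (w := wp) fun ⟨j, hj⟩ => ⟨∏ l, d l - 1, ?_, ?_⟩
  · exact (Nat.sub_one_lt (prod_pos fun l _ => hd1 l).ne').trans_eq (hw j).symm
  · refine span_le.2 ?_ (hpivot j hj)
    rintro _ ⟨i, hi, rfl⟩
    exact hnonpivot_pow i hi

end Adjoin

section Pivots

/-- The indices picked by the greedy choice of a basis among the `v i`, taken in increasing order
of `i`. -/
def pivots (F : Type*) {V I : Type*} [DivisionRing F] [AddCommGroup V] [Module F V] [Preorder I]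
    (v : I → V) : Set I :=
  {i | v i ∉ span F (v '' Set.Iio i)}

variable {F V I : Type*} [DivisionRing F] [AddCommGroup V] [Module F V] [LinearOrder I] {v : I → V}

lemma linearIndepOn_of_subset_pivots {s : Finset I} (hs : (s : Set I) ⊆ pivots F v) :
    LinearIndepOn F v (s : Set I) := by
  induction s using Finset.induction_on_max with
  | empty => simp
  | insert i s hlt ih =>
    rw [coe_insert] at hs ⊢
    exact (ih fun j hj => hs (.inr hj)).insert fun hmem =>
      hs (.inl rfl) (span_mono (Set.image_mono hlt) hmem)

lemma mem_span_image_pivots [WellFoundedLT I] {i : I} (hi : i ∉ pivots F v) :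
    v i ∈ span F (v '' {j | j ∈ pivots F v ∧ j < i}) := by
  induction i using WellFoundedLT.induction with
  | _ i ih =>
  refine span_le.2 ?_ (not_not.1 hi)
  rintro _ ⟨j, hj, rfl⟩
  by_cases hjp : j ∈ pivots F v
  · exact subset_span ⟨j, ⟨hjp, hj⟩, rfl⟩
  · refine span_mono (Set.image_mono ?_) (ih j hj hjp)
    exact fun l hl => ⟨hl.1, hl.2.trans hj⟩

end Pivots

lemma exists_pivot_coordinates {F ι : Type*} [Field F] [LinearOrder ι] [Finite ι]
    (U : Submodule F (ι → F)) :
    ∃ p : Finset ι, #p ≤ finrank F U ∧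
      ∀ i ∉ p, ∃ c : ι → F, ∀ u ∈ U, u i = ∑ j ∈ p with j < i, c j * u j := by
  classical
  have := Fintype.ofFinite ι
  let coord : ι → Dual F U := fun i => (LinearMap.proj i).domRestrict U
  refine ⟨(pivots F coord).toFinset, ?_, fun i hi => ?_⟩
  · have hindep := linearIndepOn_of_subset_pivots (Set.coe_toFinset (pivots F coord)).subset
    have hcard := hindep.fintype_card_le_finrank
    simpa only [Subspace.dual_finrank_eq, Finset.coe_sort_coe, Fintype.card_coe] using hcard
  · have hmem := mem_span_image_pivots (mt Set.mem_toFinset.2 hi)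
    obtain ⟨c, hc⟩ := (mem_span_image_finset_iff_exists_fun'
      (s := {j ∈ (pivots F coord).toFinset | j < i}) F).1 (by simpa using hmem)
    refine ⟨c, fun u hu => ?_⟩
    simpa [coord] using (DFunLike.congr_fun hc (⟨u, hu⟩ : U)).symm

section DiagonalZeros

variable {F ι : Type*} [Field F] [Fintype ι] {γ : ι → F}

/-- The variety `V₀` cut out by the `s` diagonal forms `∑ j, γ j ^ i * x j ^ d j`, `1 ≤ i ≤ s`.
The index `i` is shifted to start at `0`. -/
def diagonalZeros (γ : ι → F) (d : ι → ℕ) (s : ℕ) : Set (ι → F) :=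
  {x | ∀ i : Fin s, ∑ j, γ j ^ ((i : ℕ) + 1) * x j ^ d j = 0}

lemma sum_eval_mul_eq_zero {s : ℕ} {z : ι → F}
    (hz : ∀ i : Fin s, ∑ j, γ j ^ (i : ℕ) * z j = 0) {P : Polynomial F} (hP : P.natDegree < s) :
    ∑ j, P.eval (γ j) * z j = 0 :=
  calc ∑ j, P.eval (γ j) * z j = ∑ i ∈ range s, P.coeff i * ∑ j, γ j ^ i * z j := by
        simp only [Polynomial.eval_eq_sum_range' hP, sum_mul, mul_sum, mul_assoc]
        exact sum_comm
    _ = 0 := sum_eq_zero fun i hi => by rw [hz ⟨i, mem_range.1 hi⟩, mul_zero]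

lemma exists_eq_sum_compl_of_power_sums [DecidableEq ι] {s : ℕ} (hγ : Function.Injective γ)
    (hγ0 : ∀ j, γ j ≠ 0) {p : Finset ι} (hp : #p ≤ s) {j₀ : ι} (hj₀ : j₀ ∈ p) :
    ∃ c : ι → F, ∀ y : ι → F,
      (∀ i : Fin s, ∑ j, γ j ^ ((i : ℕ) + 1) * y j = 0) → y j₀ = ∑ j ∈ pᶜ, c j * y j := by
  let L := Lagrange.basis p γ j₀
  have hL : L.natDegree < s := by
    rw [Lagrange.natDegree_basis hγ.injOn hj₀]
    exact (Nat.sub_one_lt (card_ne_zero_of_mem hj₀)).trans_le hp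
  refine ⟨fun j => -(γ j₀)⁻¹ * (L.eval (γ j) * γ j), fun y hy => ?_⟩
  have hsum : ∑ j, L.eval (γ j) * (γ j * y j) = 0 :=
    sum_eval_mul_eq_zero (by simpa only [pow_succ, mul_assoc] using hy) hL
  have hpivot : ∑ j ∈ p, L.eval (γ j) * (γ j * y j) = γ j₀ * y j₀ := by
    rw [sum_eq_single_of_mem j₀ hj₀ fun j hj hne => by
      rw [Lagrange.eval_basis_of_ne hne.symm hj, zero_mul],
      Lagrange.eval_basis_self hγ.injOn hj₀, one_mul]
  rw [← sum_add_sum_compl p, hpivot] at hsum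
  simp only [mul_assoc, ← mul_sum]
  rw [neg_mul, ← mul_neg, ← eq_neg_of_add_eq_zero_left hsum, inv_mul_cancel_left₀ (hγ0 j₀)]

end DiagonalZeros

section Evasive

variable {F : Type*} [DivisionRing F]

/-- `V` meets every affine subspace of dimension `k ≤ s` in at most `d ^ k` points. In particular
`V` is `(k, d ^ k)`-subspace-evasive for all `k ≤ s`; unlike the latter, the condition on affine
subspaces passes to fibres of projections. -/
def IsAffinelyEvasive (F : Type*) [DivisionRing F] {E : Type*} [AddCommGroup E] [Module F E]
    (V : Set E) (d s : ℕ) : Prop :=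
  ∀ H : AffineSubspace F E, FiniteDimensional F H.direction → finrank F H.direction ≤ s →
    ((H : Set E) ∩ V).encard ≤ (d ^ finrank F H.direction : ℕ)

lemma encard_le_mul_of_encard_fiber_le {α β : Type*} {f : α → β} {S : Set α} {T : Set β} {m n : ℕ}
    (hf : Set.MapsTo f S T) (hT : T.encard ≤ m) (hfiber : ∀ y, (S ∩ f ⁻¹' {y}).encard ≤ n) :
    S.encard ≤ (m * n : ℕ) := by
  have hTfin : T.Finite := Set.finite_of_encard_le_coe hT
  have hcover : S ⊆ ⋃ y ∈ hTfin.toFinset, S ∩ f ⁻¹' {y} := fun x hx =>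
    Set.mem_biUnion (hTfin.mem_toFinset.2 (hf hx)) ⟨hx, rfl⟩
  calc S.encard ≤ ∑ y ∈ hTfin.toFinset, (S ∩ f ⁻¹' {y}).encard :=
        (Set.encard_le_encard hcover).trans (set_encard_biUnion_le _ _)
    _ ≤ #hTfin.toFinset * n := by
        simpa only [sum_const, nsmul_eq_mul] using sum_le_sum fun y _ => hfiber y
    _ ≤ (m * n : ℕ) := by
        rw [Nat.cast_mul, ← hTfin.encard_eq_coe_toFinset_card]
        gcongr

lemma finrank_map_add_finrank_inf_ker {E E' : Type*} [AddCommGroup E] [Module F E]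
    [AddCommGroup E'] [Module F E'] (f : E →ₗ[F] E') (U : Submodule F E) [FiniteDimensional F U] :
    finrank F (U.map f) + finrank F (U ⊓ f.ker : Submodule F E) = finrank F U := by
  rw [← LinearMap.finrank_range_add_finrank_ker (f.domRestrict U), LinearMap.range_domRestrict,
    LinearMap.ker_domRestrict, ← map_comap_subtype U f.ker, finrank_map_subtype_eq]

lemma encard_inter_preimage_inter_le {E E' : Type*} [AddCommGroup E] [Module F E]
    [AddCommGroup E'] [Module F E'] (f : E →ₗ[F] E') {V : Set E'} {W : Set E} {d s : ℕ}
    (hV : IsAffinelyEvasive F V d s) {H : AffineSubspace F E} [FiniteDimensional F H.direction]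
    (hdim : finrank F H.direction ≤ s)
    (hW : ∀ x₀, (((AffineSubspace.mk' x₀ (H.direction ⊓ f.ker) : AffineSubspace F E) : Set E) ∩
      W).encard ≤ (d ^ finrank F (H.direction ⊓ f.ker : Submodule F E) : ℕ)) :
    ((H : Set E) ∩ (f ⁻¹' V ∩ W)).encard ≤ (d ^ finrank F H.direction : ℕ) := by
  have hrank := finrank_map_add_finrank_inf_ker f H.direction
  have himage : ((H.map f.toAffineMap : Set E') ∩ V).encard ≤
      (d ^ finrank F (H.direction.map f) : ℕ) := by
    have h := hV (H.map f.toAffineMap)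
    rw [AffineSubspace.map_direction, LinearMap.toAffineMap_linear] at h
    exact h inferInstance (by omega)
  rw [← hrank, pow_add]
  refine encard_le_mul_of_encard_fiber_le (f := f)
    (T := (H.map f.toAffineMap : Set E') ∩ V) (fun x hx => ⟨⟨x, hx.1, rfl⟩, hx.2.1⟩) himage
    fun y => ?_
  rcases Set.eq_empty_or_nonempty ((H : Set E) ∩ (f ⁻¹' V ∩ W) ∩ f ⁻¹' {y}) with
    hempty | ⟨x₀, ⟨hx₀H, -⟩, hx₀⟩
  · rw [hempty, Set.encard_empty]
    exact zero_le
  · refine (Set.encard_le_encard ?_).trans (hW x₀)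
    rintro x ⟨⟨hxH, -, hxW⟩, hx⟩
    refine ⟨AffineSubspace.mem_mk'.2 ⟨H.vsub_mem_direction hxH hx₀H, ?_⟩, hxW⟩
    exact LinearMap.sub_mem_ker_iff.2 (Eq.trans hx hx₀.symm)

lemma encard_inter_forall_mem_le {E β : Type*} {E' : β → Type*} [AddCommGroup E] [Module F E]
    [∀ b, AddCommGroup (E' b)] [∀ b, Module F (E' b)] (π : ∀ b, E →ₗ[F] E' b) {V : ∀ b, Set (E' b)}
    {d s : ℕ} (hV : ∀ b, IsAffinelyEvasive F (V b) d s) (T : Finset β) (H : AffineSubspace F E)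
    [FiniteDimensional F H.direction] (hdim : finrank F H.direction ≤ s)
    (hinj : H.direction ⊓ ⨅ b ∈ T, (π b).ker = ⊥) :
    ((H : Set E) ∩ {x | ∀ b ∈ T, π b x ∈ V b}).encard ≤ (d ^ finrank F H.direction : ℕ) := by
  classical
  induction T using Finset.induction_on generalizing H with
  | empty =>
    have hbot : H.direction = ⊥ := by simpa using hinj
    have hsub : (H : Set E).Subsingleton := fun x hx y hy => by
      simpa [hbot, sub_eq_zero] using H.vsub_mem_direction hx hy
    have hrank : finrank F H.direction = 0 := by rw [hbot, finrank_bot]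
    simpa [hrank] using Set.encard_le_one_iff_subsingleton.2 hsub
  | insert b T _ ih =>
    have hset : {x | ∀ c ∈ insert b T, π c x ∈ V c} =
        π b ⁻¹' V b ∩ {x | ∀ c ∈ T, π c x ∈ V c} := by
      ext x
      simp
    rw [hset]
    refine encard_inter_preimage_inter_le (π b) (hV b) hdim fun x₀ => ?_
    have hdir := AffineSubspace.direction_mk' x₀ (H.direction ⊓ (π b).ker)
    have hle : finrank F (H.direction ⊓ (π b).ker : Submodule F E) ≤ s :=
      (finrank_mono inf_le_left).trans hdim
    have hbot : H.direction ⊓ (π b).ker ⊓ ⨅ c ∈ T, (π c).ker = ⊥ := by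
      rwa [inf_assoc, ← Finset.iInf_insert b T fun c => (π c).ker]
    generalize AffineSubspace.mk' x₀ (H.direction ⊓ (π b).ker) = K at hdir ⊢
    have : FiniteDimensional F K.direction := by rw [hdir]; infer_instance
    rw [← hdir] at hle hbot ⊢
    exact ih K hle hbot

theorem IsAffinelyEvasive.pi {β : Type*} [Finite β] {E : β → Type*} [∀ b, AddCommGroup (E b)]
    [∀ b, Module F (E b)] {V : ∀ b, Set (E b)} {d s : ℕ}
    (hV : ∀ b, IsAffinelyEvasive F (V b) d s) : IsAffinelyEvasive F (Set.univ.pi V) d s := by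
  have := Fintype.ofFinite β
  intro H _ hdim
  have hker : ⨅ b ∈ (univ : Finset β), (LinearMap.proj (R := F) (φ := E) b).ker = ⊥ := by
    simpa using LinearMap.iInf_ker_proj (R := F) (φ := E)
  have h := encard_inter_forall_mem_le LinearMap.proj hV univ H hdim (by rw [hker, inf_bot_eq])
  simpa [Set.pi] using h

end Evasive

section ProductSet

variable {F ι : Type*} [Field F] [LinearOrder ι] [Fintype ι] [Nonempty ι]

theorem isAffinelyEvasive_diagonalZeros {γ : ι → F} (hγ : Function.Injective γ)
    (hγ0 : ∀ j, γ j ≠ 0) {d : ι → ℕ} (hd : StrictAnti d) (hd1 : ∀ j, 1 ≤ d j) {d₀ : ℕ}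
    (hd₀ : ∀ j, d j ≤ d₀) (s : ℕ) :
    IsAffinelyEvasive F (diagonalZeros γ d s) d₀ s := by
  intro H _ hdim
  set S := (H : Set (ι → F)) ∩ diagonalZeros γ d s
  obtain hempty | ⟨a, haH, -⟩ := S.eq_empty_or_nonempty
  · simp [hempty]
  obtain ⟨p, hp, hcoord⟩ := exists_pivot_coordinates H.direction
  let X : ι → S → F := fun i x => x.1 i
  have hnonpivot : ∀ i ∉ p, X i ∈ span F (insert 1 (X '' {j | j ∈ p ∧ j < i})) := fun i hi => by
    obtain ⟨c, hc⟩ := hcoord i hi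
    have hX : X i = a i • 1 + ∑ j ∈ p with j < i, c j • (X j - a j • 1) := by
      ext x
      have hxa := hc _ (H.vsub_mem_direction x.2.1 haH)
      simpa [X, sub_eq_iff_eq_add'] using hxa
    have hone : (1 : S → F) ∈ span F (insert 1 (X '' {j | j ∈ p ∧ j < i})) :=
      subset_span (Set.mem_insert _ _)
    rw [hX]
    refine add_mem (smul_mem _ _ hone) (sum_mem fun j hj => smul_mem _ _ (sub_mem ?_ ?_))
    · exact subset_span (.inr ⟨j, by simpa using hj, rfl⟩)
    · exact smul_mem _ _ hone
  have hpivot : ∀ j ∈ p, X j ^ d j ∈ span F ((fun i => X i ^ d i) '' {i | i ∉ p}) := fun j hj => by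
    obtain ⟨c, hc⟩ := exists_eq_sum_compl_of_power_sums hγ hγ0 (hp.trans hdim) hj
    have hX : X j ^ d j = ∑ i ∈ pᶜ, c i • X i ^ d i := by
      ext x
      simpa [X] using hc (fun i => x.1 i ^ d i) x.2.2
    rw [hX]
    exact sum_mem fun i hi => smul_mem _ _ (subset_span ⟨i, mem_compl.1 hi, rfl⟩)
  obtain ⟨hfin, hrank⟩ := finite_and_finrank_adjoin_le_prod_pivots hd hd1 hnonpivot hpivot
  have hd₀pos : 0 < d₀ := (hd1 (Classical.arbitrary ι)).trans (hd₀ _)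
  refine (encard_le_finrank_adjoin_coordinates S).trans (Nat.cast_le.2 ?_)
  exact hrank.trans ((prod_le_pow_card p d d₀ fun j _ => hd₀ j).trans
    (Nat.pow_le_pow_right hd₀pos hp))

theorem stmt_8_general {β : Type*} [Finite β] {γ : ι → F} (hγ : Function.Injective γ)
    (hγ0 : ∀ j, γ j ≠ 0) {d : ι → ℕ} (hd : StrictAnti d) (hd1 : ∀ j, 1 ≤ d j) {d₀ : ℕ}
    (hd₀ : ∀ j, d j ≤ d₀) (s : ℕ) :
    IsAffinelyEvasive F (Set.univ.pi fun _ : β => diagonalZeros γ d s) d₀ s :=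
  .pi fun _ => isAffinelyEvasive_diagonalZeros hγ hγ0 hd hd1 hd₀ s

end ProductSet

/-- Dvir–Lovett, product sets are subspace-evasive. Let `q` be a prime
power, `1 ≤ s ≤ m`, `γ_1, …, γ_m` distinct elements of `F_q^*`, and `d_1 > ⋯ > d_m ≥ 1`.
Let `V₀ ⊆ F_q^m` be the common zero set of the polynomials `f_i(x) = Σ_j γ_j^i x_j^{d_j}`
(`i = 1, …, s`), and let `P = V₀^r ⊆ F_q^n` where `n = m·r` (identifying `F_q^n` with
`(F_q^m)^r`). Then for every `1 ≤ k ≤ s`, the set `P` is `(k, d_1^k)`-subspace-evasive: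
every `F_q`-linear subspace `U ⊆ F_q^n` of dimension `k` satisfies `|U ∩ P| ≤ d_1^k`. -/
theorem stmt_8 (Fq : Type) [Field Fq] [Fintype Fq] (s m : ℕ) (hs : 1 ≤ s) (hsm : s ≤ m)
    (hm : 0 < m) (γ : Fin m → Fq) (hγinj : Function.Injective γ) (hγ0 : ∀ j, γ j ≠ 0)
    (d : Fin m → ℕ) (hd : StrictAnti d) (hd1 : ∀ j, 1 ≤ d j)
    (r : ℕ) (hr : 0 < r) (k : ℕ) (hk1 : 1 ≤ k) (hks : k ≤ s)
    (U : Submodule Fq (Fin r → Fin m → Fq)) (hU : Module.finrank Fq U = k) :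
    Nat.card ↥((U : Set (Fin r → Fin m → Fq)) ∩
        {x | ∀ b : Fin r, x b ∈ {x₀ : Fin m → Fq | ∀ i : Fin s,
          ∑ j, (γ j) ^ ((i : ℕ) + 1) * x₀ j ^ d j = 0}})
      ≤ d ⟨0, hm⟩ ^ k := by
  have : Nonempty (Fin m) := ⟨⟨0, hm⟩⟩
  have hd₀ : ∀ j, d j ≤ d ⟨0, hm⟩ := fun j => hd.antitone (Fin.mk_le_of_le_val (Nat.zero_le _))
  have hbound := stmt_8_general (β := Fin r) hγinj hγ0 hd hd1 hd₀ s U.toAffineSubspace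
    inferInstance (by rwa [U.toAffineSubspace_direction, hU])
  rw [U.toAffineSubspace_direction, hU] at hbound
  refine ENat.toNat_le_of_le_natCast ((Set.encard_le_encard ?_).trans hbound)
  exact fun x ⟨hxU, hx⟩ => ⟨hxU, fun b _ => hx b⟩
end

section
/- Let q be a prime power, γ a generator of the multiplicative group F_q^*, ℓ a divisor of q−1, and N = (q−1)/ℓ. Let s ≥ 1 and 1 ≤ k ≤ ℓN be integers, and set D = ⌊(ℓN − k + 1)/(s+1)⌋. Then for any elements y_{i,j} ∈ F_q (0 ≤ i < ℓ, 0 ≤ j < N), there exist polynomials A_0, A_1, …, A_s ∈ F_q[X], not all zero, with deg A_0 ≤ D + k − 1 and deg A_r ≤ D for 1 ≤ r ≤ s, such that for all 0 ≤ i < ℓ and 0 ≤ j < N: A_0(γ^{iN+j}) + Σ_{r=1}^s A_r(γ^{iN+j}) · y_{(i+r−1 mod ℓ), j} = 0. -/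
open Polynomial

/-!
The interpolation conditions are `ℓN` homogeneous linear equations in the coefficients of the
`A r`, so a nonzero solution exists once there are more coefficients than equations. The degree
bounds leave `(D + k) + s (D + 1) = (s + 1) (D + 1) + k - 1` coefficients free, and
`D = ⌊(ℓN - k + 1) / (s + 1)⌋` is the least `D` for which this exceeds `ℓN`.
-/

theorem exists_ne_zero_degree_lt_map_eq_zero {R κ V : Type*} [Ring R] [StrongRankCondition R]
    [Fintype κ] [AddCommGroup V] [Module R V] [Module.Finite R V]
    (L : (κ → R[X]) →ₗ[R] V) (d : κ → ℕ) (hd : Module.finrank R V < ∑ r, d r) :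
    ∃ A : κ → R[X], A ≠ 0 ∧ (∀ r, (A r).degree < d r) ∧ L A = 0 := by
  have : ∀ n, Module.Finite R (degreeLT R n) := fun n ↦ .of_basis (degreeLT.basis R n)
  have : ∀ n, Module.Free R (degreeLT R n) := fun n ↦ .of_basis (degreeLT.basis R n)
  have finrank_degreeLT (n : ℕ) : Module.finrank R (degreeLT R n) = n := by
    simpa using Module.finrank_eq_card_basis (degreeLT.basis R n)
  let incl : (∀ r, degreeLT R (d r)) →ₗ[R] κ → R[X] :=
    .piMap fun r ↦ (degreeLT R (d r)).subtype
  have incl_injective : Function.Injective incl :=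
    Function.Injective.piMap fun _ ↦ Subtype.val_injective
  have not_injective : ¬ Function.Injective (L ∘ₗ incl) := fun h ↦ by
    have hle := LinearMap.finrank_le_finrank_of_injective h
    simp only [Module.finrank_pi_fintype, finrank_degreeLT] at hle
    exact hle.not_gt hd
  rw [injective_iff_map_eq_zero] at not_injective
  push Not at not_injective
  obtain ⟨B, hLB, hB⟩ := not_injective
  exact ⟨incl B, (map_ne_zero_iff incl incl_injective).2 hB,
    fun r ↦ mem_degreeLT.1 (B r).2, hLB⟩

theorem exists_ne_zero_degree_lt_sum_eval_mul_eq_zero {R ι κ : Type*} [CommRing R] [Nontrivial R]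
    [Fintype ι] [Fintype κ] (x : ι → R) (w : κ → ι → R) (d : κ → ℕ)
    (hd : Fintype.card ι < ∑ r, d r) :
    ∃ A : κ → R[X], A ≠ 0 ∧ (∀ r, (A r).degree < d r) ∧
      ∀ i, ∑ r, (A r).eval (x i) * w r i = 0 := by
  let L : (κ → R[X]) →ₗ[R] ι → R :=
    .pi fun i ↦ ∑ r, w r i • leval (x i) ∘ₗ .proj r
  obtain ⟨A, hA, hdeg, hLA⟩ := exists_ne_zero_degree_lt_map_eq_zero L d (by simpa using hd)
  refine ⟨A, hA, hdeg, fun i ↦ ?_⟩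
  simpa [L, mul_comm] using congrFun hLA i

theorem lt_add_mul_of_eq_sub_add_one_div {n k s D : ℕ} (hD : D = (n - k + 1) / (s + 1)) :
    n < D + k + s * (D + 1) := by
  have hlt : n - k + 1 < (s + 1) * (D + 1) := hD ▸ Nat.lt_mul_div_succ _ s.succ_pos
  have hmul : (s + 1) * (D + 1) = D + 1 + s * (D + 1) := by ring
  omega

theorem stmt_11_general {R ι : Type*} [CommRing R] [Nontrivial R] [Fintype ι] (x : ι → R)
    {s a b : ℕ} (hab : Fintype.card ι < a + 1 + s * (b + 1)) (w : Fin s → ι → R) :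
    ∃ A : Fin (s + 1) → R[X],
      (∃ r, A r ≠ 0) ∧
      (A 0).natDegree ≤ a ∧
      (∀ r : Fin s, (A r.succ).natDegree ≤ b) ∧
      ∀ i, (A 0).eval (x i) + ∑ r : Fin s, (A r.succ).eval (x i) * w r i = 0 := by
  have natDegree_le {p : R[X]} {n : ℕ} (hp : p.degree < (n + 1 : ℕ)) : p.natDegree ≤ n :=
    natDegree_le_of_degree_le (Order.le_of_lt_succ hp)
  obtain ⟨A, hA, hdeg, heval⟩ := exists_ne_zero_degree_lt_sum_eval_mul_eq_zero x
    (Fin.cons 1 w) (Fin.cons (a + 1) fun _ ↦ b + 1) (by simpa [Fin.sum_univ_succ] using hab)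
  exact ⟨A, Function.ne_iff.1 hA, natDegree_le (hdeg 0), fun r ↦ natDegree_le (hdeg r.succ),
    fun i ↦ by simpa [Fin.sum_univ_succ] using heval i⟩

/-- Let `q` be a prime power, `γ` a generator of `F_q^*`, `ℓ ∣ q - 1`,
`N = (q-1)/ℓ`, `s ≥ 1`, `1 ≤ k ≤ ℓN`, and `D = ⌊(ℓN - k + 1)/(s+1)⌋`. Then for any received
word `(y_{i,j})_{i ∈ ℤ/ℓ, 0 ≤ j < N}` over `F_q`, there exist polynomials `A_0, …, A_s`,
not all zero, with `deg A_0 ≤ D + k - 1` and `deg A_r ≤ D` for `r ≥ 1`, satisfying the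
interpolation conditions
`A_0(γ^(iN+j)) + Σ_{r=1}^s A_r(γ^(iN+j)) · y_{(i+r-1 mod ℓ), j} = 0` for all `i, j`. -/
theorem stmt_11 (Fq : Type) [Field Fq] [Fintype Fq] (γ : Fq)
    (hγ : orderOf γ = Fintype.card Fq - 1) (ℓ N : ℕ) (hℓ : 0 < ℓ)
    (hN : ℓ * N = Fintype.card Fq - 1) (s k : ℕ) (hs : 1 ≤ s) (hk1 : 1 ≤ k)
    (hk2 : k ≤ ℓ * N) (D : ℕ) (hD : D = (ℓ * N - k + 1) / (s + 1))
    (y : ZMod ℓ → Fin N → Fq) :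
    ∃ A : Fin (s + 1) → Polynomial Fq,
      (∃ r, A r ≠ 0) ∧
      (A 0).natDegree ≤ D + k - 1 ∧
      (∀ r : Fin s, (A r.succ).natDegree ≤ D) ∧
      ∀ (i : ZMod ℓ) (j : Fin N),
        (A 0).eval (γ ^ (i.val * N + (j : ℕ))) +
          ∑ r : Fin s, (A r.succ).eval (γ ^ (i.val * N + (j : ℕ))) * y (i + (r : ℕ)) j = 0 := by
  have : NeZero ℓ := ⟨hℓ.ne'⟩
  have hcount : Fintype.card (ZMod ℓ × Fin N) < D + k - 1 + 1 + s * (D + 1) := by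
    rw [Nat.sub_add_cancel (hk1.trans (Nat.le_add_left k D))]
    simpa [ZMod.card] using lt_add_mul_of_eq_sub_add_one_div hD
  obtain ⟨A, hA, hdeg₀, hdeg, heval⟩ := stmt_11_general
    (fun p ↦ γ ^ (p.1.val * N + (p.2 : ℕ))) hcount fun r p ↦ y (p.1 + (r : ℕ)) p.2
  exact ⟨A, hA, hdeg₀, hdeg, fun i j ↦ heval (i, j)⟩
end

section
/- Let q be a prime power, γ a generator of F_q^*, ℓ a divisor of q−1, N = (q−1)/ℓ, and ζ = γ^N (an element of order ℓ). Let s ≥ 1, 1 ≤ k ≤ ℓN, let D ≥ 0 be an integer, let y_{i,j} ∈ F_q (0 ≤ i < ℓ, 0 ≤ j < N), and let A_0, A_1, …, A_s ∈ F_q[X] satisfy deg A_0 ≤ D + k − 1, deg A_r ≤ D for 1 ≤ r ≤ s, and A_0(γ^{iN+j}) + Σ_{r=1}^s A_r(γ^{iN+j}) · y_{(i+r−1 mod ℓ), j} = 0 for all 0 ≤ i < ℓ, 0 ≤ j < N. Let f ∈ F_q[X] with deg f ≤ k−1, and let T = {j ∈ {0,…,N−1} : y_{i,j} = f(ζ^i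 γ^j) for all 0 ≤ i < ℓ}. If ℓ·|T| > D + k − 1, then A_0(X) + Σ_{r=1}^s A_r(X) · f(ζ^{r−1} X) = 0 as a polynomial identity in F_q[X]. -/
open Polynomial

/-! At a point `x = γ ^ (i * N + j) = ζ ^ i * γ ^ j` whose column `j` agrees with `f`, the
received symbols are `y (i + r - 1) j = f (ζ ^ (r - 1) * x)`, because `ζ ^ ℓ = 1`. The
interpolation condition therefore says that `x` is a root of `A₀(X) + ∑ A_r(X) f(ζ ^ (r - 1) X)`.
Since `γ` has order `ℓ * N`, the agreeing columns supply `ℓ * |T|` distinct roots, more than the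
degree allows. -/

section Exponents

variable {M : Type*} [Monoid M] {n N : ℕ} [NeZero n]

theorem pow_zmodVal_add_natCast {a : M} (ha : a ^ n = 1) (i : ZMod n) (r : ℕ) :
    a ^ (i + (r : ZMod n)).val = a ^ (i.val + r) := by
  rw [ZMod.val_add, ZMod.val_natCast, Nat.add_mod_mod, ← pow_eq_pow_mod _ ha]

theorem injective_pow_zmodVal_mul_add {g : M} (hg : orderOf g = n * N) :
    Function.Injective fun p : ZMod n × Fin N => g ^ (p.1.val * N + (p.2 : ℕ)) := by
  let toFin (i : ZMod n) : Fin n := ⟨i.val, ZMod.val_lt i⟩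
  have toFin_injective : Function.Injective toFin := fun i i' h =>
    ZMod.val_injective n (congrArg Fin.val h)
  have pow_injective : Function.Injective fun e : Fin (n * N) => g ^ (e : ℕ) := fun e e' h =>
    Fin.ext (pow_injOn_Iio_orderOf (e.isLt.trans_eq hg.symm) (e'.isLt.trans_eq hg.symm) h)
  convert pow_injective.comp
    (finProdFinEquiv.injective.comp (toFin_injective.prodMap Function.injective_id)) using 2 with p
  simp only [Function.comp_apply, finProdFinEquiv_apply_val, Prod.map_fst, Prod.map_snd, id_eq,
    toFin]
  rw [add_comm, mul_comm]

end Exponents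

theorem natDegree_comp_C_mul_X_le {R : Type*} [Semiring R] (p : R[X]) (a : R) :
    (p.comp (C a * X)).natDegree ≤ p.natDegree :=
  natDegree_comp_le.trans <| mul_le_of_le_one_right (Nat.zero_le _) <|
    (natDegree_C_mul_le a X).trans natDegree_X_le

theorem eq_zero_of_natDegree_lt_of_eval_pow_eq_zero {R : Type*} [CommRing R] [IsDomain R]
    {n N : ℕ} {g : R} (hg : orderOf g = n * N) {p : R[X]} {T : Set (Fin N)}
    (hroot : ∀ i : ZMod n, ∀ j ∈ T, p.eval (g ^ (i.val * N + (j : ℕ))) = 0)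
    (hdeg : p.natDegree < n * Nat.card T) : p = 0 := by
  classical
  have : NeZero n := ⟨by rintro rfl; simp at hdeg⟩
  have hinj : Function.Injective fun q : ZMod n × T => g ^ (q.1.val * N + (q.2 : ℕ)) :=
    (injective_pow_zmodVal_mul_add hg).comp
      (Function.injective_id.prodMap Subtype.val_injective)
  refine eq_zero_of_natDegree_lt_card_of_eval_eq_zero p hinj (fun q => hroot q.1 q.2 q.2.2) ?_
  rwa [Fintype.card_prod, ZMod.card, ← Nat.card_eq_fintype_card]

/-- The polynomial `A₀(X) + ∑_{r=1}^s A_r(X) f(ζ ^ (r - 1) X)`, obtained from an interpolation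
polynomial `A₀(X) + ∑ A_r(X) Y_r` by substituting a candidate message `f` for the received word.
The index `r : Fin s` starts at `0`, so it stands for the `r - 1` of this formula. -/
noncomputable def foldedSubst {R : Type*} [Semiring R] {s : ℕ} (ζ : R) (A : Fin (s + 1) → R[X])
    (f : R[X]) : R[X] :=
  A 0 + ∑ r : Fin s, A r.succ * f.comp (C (ζ ^ (r : ℕ)) * X)

namespace foldedSubst

variable {R : Type*} {s : ℕ}

theorem natDegree_le [Semiring R] (ζ : R) {A : Fin (s + 1) → R[X]} {f : R[X]} {D d : ℕ}
    (hA0 : (A 0).natDegree ≤ D + d) (hAr : ∀ r : Fin s, (A r.succ).natDegree ≤ D)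
    (hf : f.natDegree ≤ d) : (foldedSubst ζ A f).natDegree ≤ D + d :=
  natDegree_add_le_of_degree_le hA0 <| natDegree_sum_le_of_forall_le _ _ fun r _ =>
    natDegree_mul_le_of_le (hAr r) ((natDegree_comp_C_mul_X_le f _).trans hf)

variable [CommSemiring R]

theorem eval_eq (ζ : R) (A : Fin (s + 1) → R[X]) (f : R[X]) (x : R) :
    (foldedSubst ζ A f).eval x =
      (A 0).eval x + ∑ r : Fin s, (A r.succ).eval x * f.eval (ζ ^ (r : ℕ) * x) := by
  simp only [foldedSubst, eval_add, eval_finsetSum, eval_mul, eval_comp, eval_C, eval_X]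

theorem eval_eq_of_agree {ℓ : ℕ} [NeZero ℓ] {ζ : R} (hζ : ζ ^ ℓ = 1) (A : Fin (s + 1) → R[X])
    {f : R[X]} {b : R} {u : ZMod ℓ → R} (hu : ∀ i, u i = f.eval (ζ ^ i.val * b)) (i : ZMod ℓ) :
    (foldedSubst ζ A f).eval (ζ ^ i.val * b) =
      (A 0).eval (ζ ^ i.val * b) +
        ∑ r : Fin s, (A r.succ).eval (ζ ^ i.val * b) * u (i + (r : ℕ)) := by
  have hshift (r : ℕ) : u (i + r) = f.eval (ζ ^ r * (ζ ^ i.val * b)) := by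
    rw [hu, pow_zmodVal_add_natCast hζ, add_comm, pow_add, mul_assoc]
  simp only [eval_eq, hshift]

end foldedSubst

theorem stmt_12_general {R : Type*} [CommRing R] [IsDomain R] {γ ζ : R} {ℓ N : ℕ}
    (hγ : orderOf γ = ℓ * N) (hζ : ζ = γ ^ N) {s D d : ℕ} {y : ZMod ℓ → Fin N → R}
    {A : Fin (s + 1) → R[X]} (hA0 : (A 0).natDegree ≤ D + d)
    (hAr : ∀ r : Fin s, (A r.succ).natDegree ≤ D)
    (hinterp : ∀ (i : ZMod ℓ) (j : Fin N),
      (A 0).eval (γ ^ (i.val * N + (j : ℕ))) +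
        ∑ r : Fin s, (A r.succ).eval (γ ^ (i.val * N + (j : ℕ))) * y (i + (r : ℕ)) j = 0)
    {f : R[X]} (hf : f.natDegree ≤ d)
    (hagree : D + d <
      ℓ * Nat.card {j : Fin N // ∀ i : ZMod ℓ, y i j = f.eval (ζ ^ i.val * γ ^ (j : ℕ))}) :
    foldedSubst ζ A f = 0 := by
  have : NeZero ℓ := ⟨by rintro rfl; simp at hagree⟩
  have hζ1 : ζ ^ ℓ = 1 := by
    rw [hζ, ← pow_mul, mul_comm, ← hγ, pow_orderOf_eq_one]
  have hpoint (i j : ℕ) : γ ^ (i * N + j) = ζ ^ i * γ ^ j := by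
    rw [hζ, ← pow_mul, ← pow_add, mul_comm N]
  simp only [hpoint] at hinterp
  refine eq_zero_of_natDegree_lt_of_eval_pow_eq_zero hγ
    (T := {j | ∀ i : ZMod ℓ, y i j = f.eval (ζ ^ i.val * γ ^ (j : ℕ))}) (fun i j hj => ?_)
    ((foldedSubst.natDegree_le ζ hA0 hAr hf).trans_lt hagree)
  rw [hpoint, foldedSubst.eval_eq_of_agree hζ1 A hj, hinterp]

/-- With the setup of the interpolation step for low-order folded
Reed–Solomon codes (`γ` generating `F_q^*`, `ℓ ∣ q - 1`, `N = (q-1)/ℓ`, `ζ = γ^N`):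
if `A_0, …, A_s` satisfy the degree bounds and the interpolation conditions for a received
word `y`, and `f` (of degree `≤ k - 1`) agrees with `y` on a set `T` of columns with
`ℓ·|T| > D + k - 1`, then `A_0(X) + Σ_{r=1}^s A_r(X)·f(ζ^(r-1)X) = 0` identically. -/
theorem stmt_12 (Fq : Type) [Field Fq] [Fintype Fq] (γ : Fq)
    (hγ : orderOf γ = Fintype.card Fq - 1) (ℓ N : ℕ) (hℓ : 0 < ℓ)
    (hN : ℓ * N = Fintype.card Fq - 1) (ζ : Fq) (hζ : ζ = γ ^ N)
    (s k : ℕ) (hs : 1 ≤ s) (hk1 : 1 ≤ k) (hk2 : k ≤ ℓ * N) (D : ℕ)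
    (y : ZMod ℓ → Fin N → Fq) (A : Fin (s + 1) → Polynomial Fq)
    (hA0 : (A 0).natDegree ≤ D + k - 1)
    (hAr : ∀ r : Fin s, (A r.succ).natDegree ≤ D)
    (hinterp : ∀ (i : ZMod ℓ) (j : Fin N),
      (A 0).eval (γ ^ (i.val * N + (j : ℕ))) +
        ∑ r : Fin s, (A r.succ).eval (γ ^ (i.val * N + (j : ℕ))) * y (i + (r : ℕ)) j = 0)
    (f : Polynomial Fq) (hf : f.natDegree ≤ k - 1)
    (hagree : D + k - 1 <
      ℓ * Nat.card {j : Fin N // ∀ i : ZMod ℓ, y i j = f.eval (ζ ^ i.val * γ ^ (j : ℕ))}) :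
    A 0 + ∑ r : Fin s, A r.succ * f.comp (C (ζ ^ (r : ℕ)) * X) = 0 := by
  rw [Nat.add_sub_assoc hk1] at hA0 hagree
  exact stmt_12_general (hγ.trans hN.symm) hζ hA0 hAr hinterp hf hagree
end

section
/- Let q be a prime power, let ζ ∈ F_q^* have multiplicative order ℓ, let a, k, s be positive integers, and let R ∈ F_q[X] be a monic irreducible polynomial with deg R ≥ k that divides X^{q^a} − ζX. Let A_0, A_1, …, A_s ∈ F_q[X] be polynomials, not all zero. Then the set {f ∈ F_q[X] : deg f ≤ k−1 and A_0(X) + Σ_{r=1}^s A_r(X)·f(ζ^{r−1}X) = 0} has cardinality at most q^{a(s−1)}. -/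
open Polynomial

/-!
Modulo `R`, the dilation `X ↦ ζX` is the `q^a`-power Frobenius, so every solution `f` of the
equation reduces to a root, in the field `K = F_q[X]/(R)`, of the polynomial
`A_0 + ∑_{r=1}^s A_r Y^(q^(a(r-1)))`, whose degree is at most `q^(a(s-1))`. After dividing the `A_r`
by their greatest common divisor this polynomial is nonzero over `K`, and since `deg f < deg R` the
solution `f` is determined by its residue class.
-/

lemma exists_eq_mul_and_exists_not_dvd {α ι : Type*} [CommMonoidWithZero α] [IsGCDMonoid α]
    [Finite ι] {p : α} (hp : ¬IsUnit p) {A : ι → α} (hA : ∃ i, A i ≠ 0) :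
    ∃ (D : α) (B : ι → α), D ≠ 0 ∧ (∀ i, A i = D * B i) ∧ ∃ i, ¬p ∣ B i := by
  obtain ⟨_⟩ := nonempty_fintype ι
  obtain ⟨_⟩ : Nonempty (NormalizedGCDMonoid α) := inferInstance
  obtain ⟨i₀, hi₀⟩ := hA
  obtain ⟨B, hAB, hgcd⟩ := Finset.extract_gcd A (s := Finset.univ) ⟨i₀, Finset.mem_univ i₀⟩
  refine ⟨Finset.univ.gcd A, B, fun h ↦ hi₀ ?_, fun i ↦ hAB i (Finset.mem_univ i), ?_⟩
  · exact Finset.gcd_eq_zero_iff.1 h i₀ (Finset.mem_univ i₀)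
  · by_contra! h
    exact hp (isUnit_of_dvd_one (hgcd ▸ Finset.dvd_gcd fun i _ ↦ h i))

lemma adjoinRoot_mk_injOn_degree_lt {S : Type*} [CommRing S] {R : S[X]} (hR : R.Monic) :
    Set.InjOn (AdjoinRoot.mk R) {f | f.degree < R.degree} := by
  nontriviality S
  refine Set.LeftInvOn.injOn (f₁' := AdjoinRoot.modByMonicHom hR) fun f hf ↦ ?_
  rw [AdjoinRoot.modByMonicHom_mk, modByMonic_eq_self_iff hR]
  exact hf

section Frobenius

lemma aeval_pow_smul_of_algHom_apply_eq_smul {F K : Type*} [CommSemiring F] [Semiring K]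
    [Algebra F K] (φ : K →ₐ[F] K) {ζ : F} {x : K} (hx : φ x = ζ • x) (f : F[X]) (r : ℕ) :
    aeval (ζ ^ r • x) f = (φ ^ r) (aeval x f) := by
  have hpow : (φ ^ r) x = ζ ^ r • x := by
    induction r with
    | zero => simp
    | succ r ih => rw [pow_succ, AlgHom.mul_apply, hx, map_smul, ih, smul_smul, pow_succ']
  rw [← hpow, aeval_algHom_apply]

variable {F K : Type*} [Field F] [Fintype F] [CommRing K] [Algebra F K]

lemma frobeniusAlgHom_pow_apply (n : ℕ) (y : K) :
    (FiniteField.frobeniusAlgHom F K ^ n) y = y ^ Fintype.card F ^ n := by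
  rw [AlgHom.coe_pow, FiniteField.coe_frobeniusAlgHom, pow_iterate]

lemma aeval_pow_smul_of_pow_card_pow_eq_smul {ζ : F} {a : ℕ} {x : K}
    (hx : x ^ Fintype.card F ^ a = ζ • x) (f : F[X]) (r : ℕ) :
    aeval (ζ ^ r • x) f = aeval x f ^ (Fintype.card F ^ a) ^ r := by
  rw [← frobeniusAlgHom_pow_apply] at hx
  rw [aeval_pow_smul_of_algHom_apply_eq_smul _ hx, ← pow_mul, ← pow_mul, frobeniusAlgHom_pow_apply]

end Frobenius

section AffineLinearized

variable {K : Type*} [Semiring K] {s : ℕ}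

/-- The affine `Q`-polynomial `c₀ + ∑ r < s, c_{r+1} Y ^ (Q ^ r)`: a constant plus a linearized
polynomial, whose coefficients are shifted by one index to make room for the constant. -/
noncomputable def affineLinearized (Q : ℕ) (c : Fin (s + 1) → K) : K[X] :=
  C (c 0) + ∑ r : Fin s, C (c r.succ) * X ^ Q ^ (r : ℕ)

lemma coeff_zero_affineLinearized {Q : ℕ} (hQ : Q ≠ 0) (c : Fin (s + 1) → K) :
    (affineLinearized Q c).coeff 0 = c 0 := by
  simp [affineLinearized, coeff_X_pow, (pow_ne_zero _ hQ).symm]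

lemma coeff_pow_affineLinearized {Q : ℕ} (hQ : 1 < Q) (c : Fin (s + 1) → K) (r : Fin s) :
    (affineLinearized Q c).coeff (Q ^ (r : ℕ)) = c r.succ := by
  simp [affineLinearized, coeff_X_pow, coeff_C, Nat.ne_zero_of_lt hQ, Nat.pow_right_inj hQ,
    Fin.val_inj]

lemma affineLinearized_ne_zero {Q : ℕ} (hQ : 1 < Q) {c : Fin (s + 1) → K} (hc : ∃ i, c i ≠ 0) :
    affineLinearized Q c ≠ 0 := by
  obtain ⟨i, hi⟩ := hc
  contrapose! hi
  cases i using Fin.cases with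
  | zero => rw [← coeff_zero_affineLinearized (Nat.ne_zero_of_lt hQ) c, hi, coeff_zero]
  | succ r => rw [← coeff_pow_affineLinearized hQ c r, hi, coeff_zero]

lemma natDegree_affineLinearized_le {Q : ℕ} (hQ : 0 < Q) (c : Fin (s + 1) → K) :
    (affineLinearized Q c).natDegree ≤ Q ^ (s - 1) := by
  refine natDegree_add_le_of_degree_le (by simp) (natDegree_sum_le_of_forall_le _ _ fun r _ ↦ ?_)
  exact (natDegree_C_mul_X_pow_le _ _).trans (Nat.pow_le_pow_right hQ (Nat.le_sub_one_of_lt r.2))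

end AffineLinearized

/-- The affine dilation operator `f ↦ A₀ + ∑ r < s, A_{r+1} · f(ζ ^ r X)`, whose zeros are the
polynomials to be counted. -/
noncomputable def affineDilation {F : Type*} [CommSemiring F] {s : ℕ} (ζ : F)
    (A : Fin (s + 1) → F[X]) (f : F[X]) : F[X] :=
  A 0 + ∑ r : Fin s, A r.succ * f.comp (C (ζ ^ (r : ℕ)) * X)

lemma affineDilation_mul_left {F : Type*} [CommSemiring F] {s : ℕ} (ζ : F) (D : F[X])
    (B : Fin (s + 1) → F[X]) (f : F[X]) :
    affineDilation ζ (fun i ↦ D * B i) f = D * affineDilation ζ B f := by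
  simp only [affineDilation, mul_add, Finset.mul_sum, mul_assoc]

lemma aeval_affineDilation {F K : Type*} [Field F] [Fintype F] [CommRing K] [Algebra F K] {s a : ℕ}
    {ζ : F} {x : K} (hx : x ^ Fintype.card F ^ a = ζ • x) (A : Fin (s + 1) → F[X]) (f : F[X]) :
    aeval x (affineDilation ζ A f) =
      (affineLinearized (Fintype.card F ^ a) fun i ↦ aeval x (A i)).eval (aeval x f) := by
  have hdilate (r : ℕ) :
      aeval x (f.comp (C (ζ ^ r) * X)) = aeval x f ^ (Fintype.card F ^ a) ^ r := by
    rw [aeval_comp, ← aeval_pow_smul_of_pow_card_pow_eq_smul hx, map_mul, aeval_C, aeval_X,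
      Algebra.smul_def]
  simp only [affineDilation, affineLinearized, map_add, map_sum, map_mul, hdilate, eval_add, eval_C,
    eval_finsetSum, eval_mul, eval_pow, eval_X]

lemma adjoinRoot_root_pow_eq_smul {S : Type*} [CommRing S] {R : S[X]} {ζ : S} {n : ℕ}
    (hR : R ∣ X ^ n - C ζ * X) : AdjoinRoot.root R ^ n = ζ • AdjoinRoot.root R := by
  have h := AdjoinRoot.mk_eq_mk.2 hR
  rwa [map_pow, map_mul, AdjoinRoot.mk_X, AdjoinRoot.mk_C, ← AdjoinRoot.algebraMap_eq,
    ← Algebra.smul_def] at h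

lemma exists_affineLinearized_forall_mk_mem_rootSet {F : Type*} [Field F] [Fintype F] {ζ : F}
    {a s : ℕ} (ha : a ≠ 0) {R : F[X]} [Fact (Irreducible R)]
    (hR : R ∣ X ^ Fintype.card F ^ a - C ζ * X) {A : Fin (s + 1) → F[X]} (hA : ∃ i, A i ≠ 0) :
    ∃ c : Fin (s + 1) → AdjoinRoot R, ∀ f, affineDilation ζ A f = 0 →
      AdjoinRoot.mk R f ∈
        (affineLinearized (Fintype.card F ^ a) c).rootSet (AdjoinRoot R) := by
  have hirr : Irreducible R := Fact.out
  obtain ⟨D, B, hD, hAB, i₀, hi₀⟩ := exists_eq_mul_and_exists_not_dvd hirr.not_isUnit hA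
  obtain rfl : A = fun i ↦ D * B i := funext hAB
  refine ⟨fun i ↦ aeval (AdjoinRoot.root R) (B i), fun f hf ↦ mem_rootSet.2 ⟨?_, ?_⟩⟩
  · refine affineLinearized_ne_zero (Nat.one_lt_pow ha Fintype.one_lt_card) ⟨i₀, ?_⟩
    rwa [AdjoinRoot.aeval_eq, Ne, AdjoinRoot.mk_eq_zero]
  · rw [affineDilation_mul_left] at hf
    rw [coe_aeval_eq_eval, ← AdjoinRoot.aeval_eq f,
      ← aeval_affineDilation (adjoinRoot_root_pow_eq_smul hR), (mul_eq_zero.1 hf).resolve_left hD,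
      map_zero]

/-- Let `q` be a prime power, `ζ ∈ F_q^*` of multiplicative order `ℓ`,
`a, k, s ≥ 1`, and let `R ∈ F_q[X]` be a monic irreducible polynomial of degree `≥ k`
dividing `X^(q^a) - ζX` (equivalently `ζX ≡ X^(q^a) (mod R)`). Let `A_0, …, A_s ∈ F_q[X]`,
not all zero. Then there are at most `q^(a(s-1))` polynomials `f ∈ F_q[X]` of degree `≤ k-1`
with `A_0(X) + Σ_{r=1}^s A_r(X)·f(ζ^(r-1)X) = 0`. -/
theorem stmt_13 (Fq : Type) [Field Fq] [Fintype Fq] (ζ : Fq) (ℓ : ℕ) (hℓ : 0 < ℓ)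
    (hζ : orderOf ζ = ℓ) (a k s : ℕ) (ha : 0 < a) (hk : 0 < k) (hs : 0 < s)
    (R : Polynomial Fq) (hmonic : R.Monic) (hirr : Irreducible R)
    (hdeg : k ≤ R.natDegree) (hR : R ∣ (X ^ (Fintype.card Fq ^ a) - C ζ * X))
    (A : Fin (s + 1) → Polynomial Fq) (hA : ∃ r, A r ≠ 0) :
    Nat.card {f : Polynomial Fq // f.natDegree ≤ k - 1 ∧
        A 0 + ∑ r : Fin s, A r.succ * f.comp (C (ζ ^ (r : ℕ)) * X) = 0}
      ≤ Fintype.card Fq ^ (a * (s - 1)) := by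
  have : Fact (Irreducible R) := ⟨hirr⟩
  set Q := Fintype.card Fq ^ a
  obtain ⟨c, hc⟩ := exists_affineLinearized_forall_mk_mem_rootSet ha.ne' hR hA
  set P : (AdjoinRoot R)[X] := affineLinearized Q c
  set S : Set Fq[X] := {f | f.natDegree ≤ k - 1 ∧ affineDilation ζ A f = 0}
  have hinj : S.InjOn (AdjoinRoot.mk R) := (adjoinRoot_mk_injOn_degree_lt hmonic).mono fun f hf ↦
    degree_lt_degree (hf.1.trans_lt (by omega))
  calc Nat.card S
    _ ≤ (P.rootSet (AdjoinRoot R)).ncard :=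
        Set.ncard_le_ncard_of_injOn _ (fun f hf ↦ hc f hf.2) hinj (P.rootSet_finite _)
    _ ≤ P.natDegree := P.ncard_rootSet_le _
    _ ≤ Q ^ (s - 1) := natDegree_affineLinearized_le (pow_pos Fintype.card_pos a) c
    _ = Fintype.card Fq ^ (a * (s - 1)) := (pow_mul _ _ _).symm
end
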